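/- arXiv:2507.16374 — 2 statements merged into one kernel-verified Lean document; each statement's English description precedes it below -/
import Mathlib

section
/- Let X be a topological space and f : X → X a continuous map which is a homotopy equivalence. Then the mapping torus projection p : T_f → S¹ (sending the class of (x,t) to the class of t) is a quasifibration, i.e. for every y ∈ S¹, every x ∈ p⁻¹(y) and every i ≥ 1, the induced map π_i(T_f, p⁻¹(y), x) → π_i(S¹, y) is a bijection. -/
/-!
The relative homotopy sets of `(T_f, p⁻¹(y))` are computed by unrolling the mapping torus along the
universal cover `ℝ → S¹`.  Write `y = [t₀]` with `t₀ ∈ [0,1)`, let `F = p⁻¹(y)`, and for `N : ℕ` let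
`U_N` be the part over `(-∞, t₀ + N]` of the pullback of `T_f` along `ℝ → S¹`, that is, pairs
`(e, r)` with `p e = [r]` and `r ≤ t₀ + N`.

The mapping torus carries a semiflow moving the circle coordinate forward at unit speed.  Flowing
every point of `U_N` up to height `t₀ + N` deformation retracts `U_N` onto its top fibre `F`.
Under this retraction the inclusion of `F` at a lower level `t₀ + k`, `k ≤ N`, becomes the time
`N - k` flow on `F`, which is `f^(N-k)` under `F ≃ X`.  As `f` is a homotopy equivalence, every
inclusion `F → U_N` at a level `t₀ + k` is a homotopy equivalence (`isHEquiv_fibIncl`), so its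
homotopy fibres are contractible (`contractible_hFib`).

A homotopy in `S¹` between the projections of two relative loops lifts to `ℝ`.  The lift is
constantly `t₀` on the part of the boundary that goes to the base point and constantly `t₀ + k`
on the remaining face (`lift_faces`).  By compactness it stays below some `t₀ + N`.
Reading the first cube coordinate as a path parameter, each relative loop together with the lift
is a map from the `n`-cube to the homotopy fibre over the base point of the level `t₀ + k`
inclusion `F → U_N`, constant on the boundary.  Since that homotopy fibre is contractible, the two
maps are homotopic rel boundary (`homotopicRel_of_contractible`), which is the required homotopy of
relative loops.

For surjectivity, a point of the same homotopy fibre is a path in `U_N` from level `t₀ + k` to the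
base point; used in the first coordinate, it is a relative loop whose height agrees on the boundary
with the lift of the given loop in `S¹`, and the two heights are homotopic by a linear homotopy
in `ℝ`.  When `n > 0` the integer `k` vanishes and the constant path is used.
-/

/-!
Statement 0: For a continuous map `f : X → X` which is a homotopy equivalence, the
mapping torus projection `T_f → S¹` is a quasifibration.
-/

open unitInterval

noncomputable section

/-- Maps of the pair `(Iⁿ⁺¹, ∂Iⁿ⁺¹-face {t₀ = 0}, J)` into `(E, A, x)`: continuous maps on the
`(n+1)`-cube sending the face `{t₀ = 0}` into `A` and the rest of the boundary to the
basepoint `x`.  These represent elements of the relative homotopy group `π_{n+1}(E, A, x)`. -/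
structure RelGenLoop (n : ℕ) (E : Type*) [TopologicalSpace E] (A : Set E) (x : E) where
  toFun : (Fin (n + 1) → I) → E
  continuous_toFun : Continuous toFun
  face_mem : ∀ t : Fin (n + 1) → I, t 0 = 0 → toFun t ∈ A
  jboundary_eq : ∀ t : Fin (n + 1) → I,
    (t 0 = 1 ∨ ∃ i : Fin (n + 1), i ≠ 0 ∧ (t i = 0 ∨ t i = 1)) → toFun t = x

/-- Homotopy of maps of pairs, i.e. the equivalence relation defining the relative homotopy
group `π_{n+1}(E, A, x)` on `RelGenLoop n E A x`. -/
def RelGenLoop.Homotopic {n : ℕ} {E : Type*} [TopologicalSpace E] {A : Set E} {x : E}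
    (f g : RelGenLoop n E A x) : Prop :=
  ∃ H : ((Fin (n + 1) → I) × I) → E, Continuous H ∧
    (∀ t, H (t, 0) = f.toFun t) ∧ (∀ t, H (t, 1) = g.toFun t) ∧
    (∀ t s, t 0 = 0 → H (t, s) ∈ A) ∧
    (∀ t s, (t 0 = 1 ∨ ∃ i : Fin (n + 1), i ≠ 0 ∧ (t i = 0 ∨ t i = 1)) → H (t, s) = x)

/-- A continuous map on the `(n+1)`-cube sending the whole boundary to `y`; a representative
of an element of `π_{n+1}(B, y)`. -/
def IsGenLoopAt (n : ℕ) {B : Type*} [TopologicalSpace B] (g : (Fin (n + 1) → I) → B)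
    (y : B) : Prop :=
  Continuous g ∧ ∀ t : Fin (n + 1) → I, (∃ i, t i = 0 ∨ t i = 1) → g t = y

/-- Homotopy rel boundary of maps of the `(n+1)`-cube sending the boundary to `y`; the
equivalence relation defining `π_{n+1}(B, y)`. -/
def GenLoopHomotopic (n : ℕ) {B : Type*} [TopologicalSpace B]
    (g₁ g₂ : (Fin (n + 1) → I) → B) (y : B) : Prop :=
  ∃ H : ((Fin (n + 1) → I) × I) → B, Continuous H ∧
    (∀ t, H (t, 0) = g₁ t) ∧ (∀ t, H (t, 1) = g₂ t) ∧
    ∀ t s, (∃ i, t i = 0 ∨ t i = 1) → H (t, s) = y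

/-- A continuous map `p : E → B` is a quasifibration if for all `i ≥ 1`, all `y ∈ B` and all
`x ∈ p⁻¹(y)`, the induced map `π_i(E, p⁻¹(y), x) → π_i(B, y)`, `[f] ↦ [p ∘ f]`, is a
bijection.  This is spelled out at the level of representatives: surjectivity and
injectivity of the induced map on homotopy classes. -/
def IsQuasifibration {E B : Type*} [TopologicalSpace E] [TopologicalSpace B]
    (p : E → B) : Prop :=
  ∀ (n : ℕ) (y : B) (x : E), p x = y →
    (∀ g : (Fin (n + 1) → I) → B, IsGenLoopAt n g y →
      ∃ f : RelGenLoop n E (p ⁻¹' {y}) x, GenLoopHomotopic n (p ∘ f.toFun) g y) ∧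
    (∀ f₁ f₂ : RelGenLoop n E (p ⁻¹' {y}) x,
      GenLoopHomotopic n (p ∘ f₁.toFun) (p ∘ f₂.toFun) y → f₁.Homotopic f₂)

/-- The relation on `X × [0,1]` generating the mapping torus of `f`: `(x, 1) ∼ (f x, 0)`. -/
def MappingTorusRel {X : Type*} (f : X → X) : X × I → X × I → Prop := fun a b =>
  a.2 = 1 ∧ b.2 = 0 ∧ b.1 = f a.1

/-- The mapping torus `T_f = X × [0,1] / ((x,1) ∼ (f x, 0))`. -/
def MappingTorus {X : Type*} [TopologicalSpace X] (f : X → X) : Type _ :=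
  Quot (MappingTorusRel f)

instance {X : Type*} [TopologicalSpace X] (f : X → X) : TopologicalSpace (MappingTorus f) :=
  inferInstanceAs (TopologicalSpace (Quot _))

/-- The circle as `[0,1]/(0 ∼ 1)`. -/
def Circle01 : Type :=
  Quot (fun a b : I => a = 1 ∧ b = 0)

instance : TopologicalSpace Circle01 :=
  inferInstanceAs (TopologicalSpace (Quot _))

/-- The mapping torus projection `T_f → S¹`, `[(x, t)] ↦ [t]`. -/
def mappingTorusProj {X : Type*} [TopologicalSpace X] (f : X → X) :
    MappingTorus f → Circle01 :=
  Quot.map Prod.snd (fun _ _ h => ⟨h.1, h.2.1⟩)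

/-- The clamping map `ℝ → [0,1]`, used to write maps into `I` by formulas in `ℝ`. -/
def pr : ℝ → I := Set.projIcc 0 1 zero_le_one

@[fun_prop]
lemma continuous_pr : Continuous pr := continuous_projIcc

lemma pr_of_le {u : ℝ} (h : u ≤ 0) : pr u = 0 := Set.projIcc_of_le_left _ h
lemma pr_of_ge {u : ℝ} (h : 1 ≤ u) : pr u = 1 := Set.projIcc_of_right_le _ h
@[simp] lemma pr_zero : pr 0 = 0 := pr_of_le le_rfl
@[simp] lemma pr_one : pr 1 = 1 := pr_of_ge le_rfl
@[simp] lemma pr_coe (u : I) : pr u = u := Set.projIcc_val _ u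
lemma pr_of_mem {u : ℝ} (h : u ∈ I) : pr u = ⟨u, h⟩ := Set.projIcc_of_mem _ h

/-! ### Homotopy fibres of homotopy equivalences -/

section HFib
variable {X Y Z : Type*} [TopologicalSpace X] [TopologicalSpace Y] [TopologicalSpace Z]

/-- The homotopy fibre of `φ` over `b`: a point of `X` together with a path from its image to `b`. -/
def HFib (φ : C(X, Y)) (b : Y) : Type _ :=
  {p : X × C(I, Y) // p.2 0 = φ p.1 ∧ p.2 1 = b}

instance (φ : C(X, Y)) (b : Y) : TopologicalSpace (HFib φ b) :=
  inferInstanceAs (TopologicalSpace (Subtype _))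

variable {φ : C(X, Y)} {b : Y}

namespace HFib

/-- The underlying point of the domain. -/
def pt (h : HFib φ b) : X := h.1.1

/-- The underlying path, from `φ` of the point to `b`. -/
def path (h : HFib φ b) : C(I, Y) := h.1.2

lemma path_zero (h : HFib φ b) : h.path 0 = φ h.pt := h.2.1
lemma path_one (h : HFib φ b) : h.path 1 = b := h.2.2

@[fun_prop]
lemma continuous_pt : Continuous (pt : HFib φ b → X) := continuous_fst.comp continuous_subtype_val

@[fun_prop]
lemma continuous_path : Continuous (path : HFib φ b → C(I, Y)) :=
  continuous_snd.comp continuous_subtype_val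

@[fun_prop]
lemma continuous_path_eval {f : Z → HFib φ b} {g : Z → I} (hf : Continuous f) (hg : Continuous g) :
    Continuous fun z => (f z).path (g z) := by
  have : Continuous fun z => (f z).path := continuous_path.comp hf
  fun_prop

/-- The map into the homotopy fibre given by a map `a` to the domain and a family `F` of paths
from `φ ∘ a` to `b`, written in uncurried form. -/
def mk' (a : Z → X) (ha : Continuous a) (F : Z × I → Y) (hF : Continuous F)
    (h0 : ∀ z, F (z, 0) = φ (a z)) (h1 : ∀ z, F (z, 1) = b) : C(Z, HFib φ b) where
  toFun z := ⟨(a z, ContinuousMap.curry ⟨F, hF⟩ z), h0 z, h1 z⟩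
  continuous_toFun := by
    refine Continuous.subtype_mk ?_ _
    exact ha.prodMk (ContinuousMap.continuous _)

@[simp] lemma mk'_pt (a : Z → X) (ha : Continuous a) (F : Z × I → Y) (hF : Continuous F)
    (h0 : ∀ z, F (z, 0) = φ (a z)) (h1 : ∀ z, F (z, 1) = b) (z : Z) :
    (mk' a ha F hF h0 h1 z).pt = a z := rfl

@[simp] lemma mk'_path (a : Z → X) (ha : Continuous a) (F : Z × I → Y) (hF : Continuous F)
    (h0 : ∀ z, F (z, 0) = φ (a z)) (h1 : ∀ z, F (z, 1) = b) (z : Z) (u : I) :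
    (mk' a ha F hF h0 h1 z).path u = F (z, u) := rfl

@[ext]
lemma ext' {h h' : HFib φ b} (h1 : h.pt = h'.pt) (h2 : ∀ u, h.path u = h'.path u) : h = h' :=
  Subtype.ext (Prod.ext h1 (ContinuousMap.ext h2))

end HFib
open HFib

lemma contractible_of_dominated (i : C(X, Y)) (j : C(Y, X))
    (h : (j.comp i).Homotopic (ContinuousMap.id X)) [ContractibleSpace Y] : ContractibleSpace X := by
  rw [contractible_iff_id_nullhomotopic]
  obtain ⟨y, hy⟩ := ((id_nullhomotopic Y).comp_right j).comp_left i
  exact ⟨y, h.symm.trans hy⟩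

/-- The homotopy fibre of the identity is a based path space, contracted by shortening paths. -/
lemma contractible_hFib_id (c : X) : ContractibleSpace (HFib (ContinuousMap.id X) c) := by
  rw [contractible_iff_id_nullhomotopic]
  refine ⟨⟨(c, .const _ c), rfl, rfl⟩, ⟨⟨mk' (fun z => z.2.path z.1) (by fun_prop)
    (fun w => w.1.2.path (max w.1.1 w.2)) (by fun_prop) (fun z => ?_) (fun z => ?_), ?_, ?_⟩⟩⟩
  · simp
  · show z.2.path (max z.1 1) = c
    rw [max_eq_right unitInterval.le_one', path_one]
  · intro z
    ext u
    · exact z.path_zero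
    · show z.path (max 0 u) = z.path u
      rw [max_eq_right unitInterval.nonneg']
  · intro z
    ext u
    · exact z.path_one
    · show z.path (max 1 u) = c
      rw [max_eq_left unitInterval.le_one', path_one]

/-- A homotopy `K` from `ψ` to the identity makes the homotopy fibre of `ψ` a retract up to homotopy of
that of the identity: precomposing a path with `K` or its reverse changes its starting point
from `x` to `ψ x` or back. -/
lemma contractible_hFib_of_homotopic_id (ψ : C(X, X)) (K : ψ.Homotopy (ContinuousMap.id X)) (c : X) :
    ContractibleSpace (HFib ψ c) := by
  have := contractible_hFib_id c
  obtain ⟨i, i_pt, i_path⟩ : ∃ i : C(HFib ψ c, HFib (ContinuousMap.id X) c), (∀ h, (i h).pt = h.pt) ∧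
      ∀ h (u : I), (i h).path u = (if (u : ℝ) ≤ 1 / 2 then K (pr (1 - 2 * u), h.pt) else
        h.path (pr (2 * u - 1))) :=
    ⟨mk' pt (by fun_prop)
    (fun w => if (w.2 : ℝ) ≤ 1 / 2 then K (pr (1 - 2 * w.2), w.1.pt) else
      w.1.path (pr (2 * w.2 - 1)))
    (by
      refine Continuous.if_le (by fun_prop) (by fun_prop) (by fun_prop) (by fun_prop) ?_
      intro w hw
      simp [hw, path_zero]) (by simp) (by intro z; norm_num [path_one]), fun _ => rfl, fun _ _ => rfl⟩
  obtain ⟨j, j_pt, j_path⟩ : ∃ j : C(HFib (ContinuousMap.id X) c, HFib ψ c), (∀ h, (j h).pt = h.pt) ∧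
      ∀ h (u : I), (j h).path u = (if (u : ℝ) ≤ 1 / 3 then K (pr (3 * u), h.pt) else
        h.path (pr ((3 * u - 1) / 2))) :=
    ⟨mk' pt (by fun_prop)
    (fun w => if (w.2 : ℝ) ≤ 1 / 3 then K (pr (3 * w.2), w.1.pt) else
      w.1.path (pr ((3 * w.2 - 1) / 2)))
    (by
      refine Continuous.if_le (by fun_prop) (by fun_prop) (by fun_prop) (by fun_prop) ?_
      intro w hw
      simp [hw, path_zero]) (by simp) (by intro z; norm_num [path_one]), fun _ => rfl, fun _ _ => rfl⟩
  refine contractible_of_dominated i j (ContinuousMap.Homotopic.symm ?_)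
  -- At time `s` the path runs along `K` from `0` up to time `s` and back, then along the given path.
  refine ⟨⟨mk' (fun z => z.2.pt) (by fun_prop)
    (fun w => if (w.2 : ℝ) ≤ 2 * w.1.1 / 3 then K (pr (min (3 * w.2) (2 * w.1.1 - 3 * w.2)), w.1.2.pt)
      else w.1.2.path (pr ((w.2 - 2 * w.1.1 / 3) / (1 - 2 * w.1.1 / 3)))) ?_ ?_ ?_, ?_, ?_⟩⟩
  · have hne : ∀ w : (I × HFib ψ c) × I, (1 - 2 * (w.1.1 : ℝ) / 3) ≠ 0 := fun w => by
      have := w.1.1.2.2; linarith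
    refine Continuous.if_le (by fun_prop) ?_ (by fun_prop) (by fun_prop) ?_
    · have : Continuous fun w : (I × HFib ψ c) × I =>
          ((w.2 : ℝ) - 2 * w.1.1 / 3) / (1 - 2 * w.1.1 / 3) :=
        Continuous.div (by fun_prop) (by fun_prop) hne
      fun_prop
    · intro w hw
      rw [hw, pr_of_le (u := min _ _) (by refine (min_le_right _ _).trans ?_; linarith), sub_self, zero_div, pr_zero,
        path_zero]
      simp
  · intro z
    have := z.1.2.1
    simp only [Set.Icc.coe_zero]
    rw [if_pos (by linarith), pr_of_le (by simp)]
    simp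
  · intro z
    have := z.1.2.2
    simp only [Set.Icc.coe_one]
    rw [if_neg (by linarith), div_self (by linarith), pr_one, path_one]
  · intro z
    ext u
    · rfl
    · have := u.2.1
      by_cases hu : (u : ℝ) ≤ 0
      · have : u = 0 := le_antisymm hu u.2.1
        simp [this, path_zero]
      · simp [hu]
  · intro z
    ext u
    · simp [i_pt, j_pt]
    · simp only [ContinuousMap.toFun_eq_coe, mk'_path, Set.Icc.coe_one, ContinuousMap.comp_apply,
        j_path, i_pt, i_path]
      rcases le_or_gt (u : ℝ) (1 / 3) with h | h
      · rw [if_pos (by linarith), if_pos h, min_eq_left (by linarith)]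
      · rw [if_neg (not_le.2 h)]
        have h1 : (3 * (u : ℝ) - 1) / 2 ∈ I := ⟨by linarith, by have := u.2.2; linarith⟩
        rw [pr_of_mem h1]
        rcases le_or_gt (u : ℝ) (2 / 3) with h' | h'
        · rw [if_pos (by linarith), if_pos (show (3 * (u : ℝ) - 1) / 2 ≤ 1 / 2 by linarith),
            min_eq_right (by linarith)]
          congr 3; show _ = 1 - 2 * ((3 * (u : ℝ) - 1) / 2); ring
        · rw [if_neg (by linarith), if_neg (show ¬ (3 * (u : ℝ) - 1) / 2 ≤ 1 / 2 by linarith)]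
          congr 2; show _ = 2 * ((3 * (u : ℝ) - 1) / 2) - 1; field_simp; ring

/-- If `γ` is a homotopy inverse of `φ`, the homotopy fibre of `φ` over `b` is dominated by that of
`γ ∘ φ` over `γ b`: paths are pushed forward by `γ` one way, and by `φ` the other way, with
both ends corrected along the homotopy `φ ∘ γ ∼ id`. No coherence between the two homotopies is
needed, since only one composite has to be homotopic to the identity. -/
lemma contractible_hFib (φ : C(X, Y)) (γ : C(Y, X))
    (K : (γ.comp φ).Homotopic (ContinuousMap.id X)) (L : (φ.comp γ).Homotopic (ContinuousMap.id Y)) (b : Y) :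
    ContractibleSpace (HFib φ b) := by
  obtain ⟨K⟩ := K
  obtain ⟨L⟩ := L
  have := contractible_hFib_of_homotopic_id _ K (γ b)
  obtain ⟨i, i_pt, i_path⟩ : ∃ i : C(HFib φ b, HFib (γ.comp φ) (γ b)), (∀ h, (i h).pt = h.pt) ∧
      ∀ h (u : I), (i h).path u = (γ (h.path u)) :=
    ⟨mk' pt (by fun_prop)
    (fun w => γ (w.1.path w.2)) (by fun_prop) (by simp [path_zero]) (by simp [path_one]), fun _ => rfl, fun _ _ => rfl⟩
  obtain ⟨j, j_pt, j_path⟩ : ∃ j : C(HFib (γ.comp φ) (γ b), HFib φ b), (∀ h, (j h).pt = h.pt) ∧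
      ∀ h (u : I), (j h).path u = (if (u : ℝ) ≤ 1 / 3 then L (pr (1 - 3 * u), φ h.pt) else
        if (u : ℝ) ≤ 2 / 3 then φ (h.path (pr (3 * u - 1))) else L (pr (3 * u - 2), b)) :=
    ⟨mk' pt (by fun_prop)
    (fun w => if (w.2 : ℝ) ≤ 1 / 3 then L (pr (1 - 3 * w.2), φ w.1.pt) else
      if (w.2 : ℝ) ≤ 2 / 3 then φ (w.1.path (pr (3 * w.2 - 1))) else L (pr (3 * w.2 - 2), b))
    (by
      refine Continuous.if_le (by fun_prop) ?_ (by fun_prop) (by fun_prop) ?_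
      · refine Continuous.if_le (by fun_prop) (by fun_prop) (by fun_prop) (by fun_prop) ?_
        intro w hw
        rw [hw, pr_of_ge (by norm_num), pr_of_le (by norm_num), path_one]; simp
      · intro w hw
        rw [hw, if_pos (by norm_num), pr_of_le (by norm_num), pr_of_le (by norm_num), path_zero]
        simp)
    (by simp) (by intro z; norm_num), fun _ => rfl, fun _ _ => rfl⟩
  refine contractible_of_dominated i j ?_
  -- `L` is applied to all of the path, starting from its reparametrization on the middle third,
  -- while the reparametrization is undone.
  refine ⟨⟨mk' (fun z => z.2.pt) (by fun_prop)
    (fun w => L (pr (max w.1.1 (max (1 - 3 * w.2) (3 * w.2 - 2))),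
      w.1.2.path (pr (w.2 + (1 - w.1.1) * (2 * w.2 - 1))))) (by fun_prop) ?_ ?_, ?_, ?_⟩⟩
  · intro z
    have := z.1.2.2
    simp only [Set.Icc.coe_zero]
    rw [pr_of_ge (by simp), pr_of_le (by linarith), path_zero]
    simp
  · intro z
    have := z.1.2.2
    simp only [Set.Icc.coe_one]
    rw [pr_of_ge (by norm_num), pr_of_ge (by linarith), path_one]
    simp
  · intro z
    ext u
    · simp [i_pt, j_pt]
    · have := u.2.1
      have := u.2.2
      simp only [ContinuousMap.toFun_eq_coe, mk'_path, Set.Icc.coe_zero, ContinuousMap.comp_apply,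
        j_path, i_pt, i_path]
      split_ifs with h h'
      · rw [pr_of_le (u := (u : ℝ) + _) (by linarith), path_zero, max_eq_right (le_max_of_le_left (by linarith)),
          max_eq_left (by linarith)]
      · rw [pr_of_le (u := max _ _) (by simp; constructor <;> linarith), ContinuousMap.Homotopy.apply_zero]
        show φ (γ _) = _
        congr 4; ring
      · rw [pr_of_ge (u := (u : ℝ) + _) (by linarith), path_one, max_eq_right (le_max_of_le_right (by linarith)),
          max_eq_right (by linarith)]
  · intro z
    ext u
    · rfl
    · simp only [ContinuousMap.toFun_eq_coe, mk'_path, Set.Icc.coe_one]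
      rw [pr_of_ge (by simp)]
      simp

end HFib

/-! ### Maps from cubes to contractible spaces -/

section Cube
variable {n : ℕ} {H : Type*} [TopologicalSpace H]

/-- The expansion of the cube about its centre by the factor `1 + s`, clamped to the cube. -/
def zoom (t : Fin n → I) (s : I) : Fin n → I := fun i => pr (t i + s * (t i - 1 / 2))

/-- A function on the cube vanishing on the boundary and equal to `1` on the concentric cube of half
the size. -/
def depth (t : Fin n → I) : I := ∏ i, pr (min (4 * t i) (4 * (1 - t i)))

lemma depth_eq_zero {t : Fin n → I} (ht : t ∈ Cube.boundary (Fin n)) : depth t = 0 := by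
  obtain ⟨i, hi⟩ := ht
  refine Finset.prod_eq_zero (Finset.mem_univ i) ?_
  rcases hi with hi | hi <;> rw [hi] <;> exact pr_of_le (by simp)

lemma zoom_mem_boundary {t : Fin n → I} (s : I) (ht : t ∈ Cube.boundary (Fin n)) :
    zoom t s ∈ Cube.boundary (Fin n) := by
  obtain ⟨i, hi⟩ := ht
  have := s.2.1
  refine ⟨i, hi.imp (fun hi => ?_) (fun hi => ?_)⟩
  · exact pr_of_le (by simp [hi]; linarith)
  · exact pr_of_ge (by norm_num [hi]; exact this)

lemma depth_eq_one_or {t : Fin n → I} : depth t = 1 ∨ zoom t 1 ∈ Cube.boundary (Fin n) := by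
  by_contra! h
  refine h.1 (Finset.prod_eq_one fun i _ => pr_of_ge ?_)
  have h2 := h.2
  simp only [Cube.boundary, Set.mem_ofPred_eq, not_exists, not_or] at h2
  obtain ⟨h2, h3⟩ := h2 i
  rw [le_min_iff]
  constructor
  · by_contra! h4
    exact h2 (pr_of_le (by simp; linarith))
  · by_contra! h4
    exact h3 (pr_of_ge (by simp; linarith))

/-- Two maps from a cube to a contractible space which are constant on the boundary with the same value
are homotopic rel boundary: after zooming in, the contraction is switched on by `depth`, so that the
resulting map is the end of the contraction on the inner cube, and depends only on the boundary
value elsewhere. -/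
theorem homotopicRel_of_contractible [ContractibleSpace H] {x : H} (e₁ e₂ : C(Fin n → I, H))
    (h₁ : ∀ t ∈ Cube.boundary (Fin n), e₁ t = x) (h₂ : ∀ t ∈ Cube.boundary (Fin n), e₂ t = x) :
    e₁.HomotopicRel e₂ (Cube.boundary (Fin n)) := by
  obtain ⟨c, ⟨C⟩⟩ := id_nullhomotopic H
  have key : ∀ e : C(Fin n → I, H), (∀ t ∈ Cube.boundary (Fin n), e t = x) →
      e.HomotopicRel ⟨fun t => C (depth t, e (zoom t 1)), by unfold depth zoom; fun_prop⟩
        (Cube.boundary (Fin n)) := by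
    intro e he
    refine ⟨⟨⟨⟨fun w => C (min w.1 (depth w.2), e (zoom w.2 w.1)), by unfold depth zoom; fun_prop⟩,
      fun t => ?_, fun t => ?_⟩, fun s t ht => ?_⟩⟩
    · have : zoom t 0 = t := by ext i; simp [zoom]
      simp [this]
    · simp [min_eq_right unitInterval.le_one']
    · simp [depth_eq_zero ht, he _ ht, he _ (zoom_mem_boundary s ht)]
  refine (key e₁ h₁).trans ?_
  convert! (key e₂ h₂).symm using 1
  ext t
  show C (depth t, e₁ (zoom t 1)) = C (depth t, e₂ (zoom t 1))
  rcases depth_eq_one_or (t := t) with h | h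
  · simp [h]
  · rw [h₁ _ h, h₂ _ h]
end Cube

/-! ### The circle and path lifting -/

section Circle

/-- The map `[0,1]/(0 ∼ 1) → ℝ/ℤ` induced by the inclusion of `[0,1]` in `ℝ`. -/
def circleFun : Circle01 → AddCircle (1 : ℝ) :=
  Quot.lift (fun t : I => ((t : ℝ) : AddCircle (1 : ℝ))) (by
    rintro a b ⟨rfl, rfl⟩
    simp)

lemma coe_eq_coe_iff (a b : ℝ) : (a : AddCircle (1 : ℝ)) = b ↔ ∃ k : ℤ, b = a + k := by
  rw [eq_comm, ← sub_eq_zero, ← AddCircle.coe_sub, AddCircle.coe_eq_zero_iff]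
  simp only [zsmul_eq_mul, mul_one]
  exact exists_congr fun k => ⟨fun h => by linarith, fun h => by linarith⟩

lemma coe_eq_coe_cases {a b : ℝ} (ha : a ∈ I) (hb : b ∈ I)
    (h : (a : AddCircle (1 : ℝ)) = b) : a = b ∨ (a = 1 ∧ b = 0) ∨ (a = 0 ∧ b = 1) := by
  obtain ⟨k, hk⟩ := (coe_eq_coe_iff a b).1 h
  have h1 : (-2 : ℝ) < k := by linarith [ha.1, ha.2, hb.1, hb.2]
  have h2 : (k : ℝ) < 2 := by linarith [ha.1, ha.2, hb.1, hb.2]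
  have h1' : -2 < k := by exact_mod_cast h1
  have h2' : k < 2 := by exact_mod_cast h2
  have h3 : k = -1 ∨ k = 0 ∨ k = 1 := by omega
  rcases h3 with rfl | rfl | rfl
  · right; left
    push_cast at hk
    constructor <;> linarith [ha.1, ha.2, hb.1, hb.2]
  · left; simpa using hk.symm
  · right; right
    push_cast at hk
    constructor <;> linarith [ha.1, ha.2, hb.1, hb.2]

lemma continuous_circleFun : Continuous circleFun :=
  continuous_quot_lift _ (by fun_prop)

lemma circleFun_bijective : Function.Bijective circleFun := by
  constructor
  · rintro ⟨a⟩ ⟨b⟩ h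
    rcases coe_eq_coe_cases a.2 b.2 h with h | ⟨h, h'⟩ | ⟨h, h'⟩
    · rw [Subtype.ext h]
    · exact Quot.sound ⟨Subtype.ext h, Subtype.ext h'⟩
    · exact (Quot.sound ⟨Subtype.ext h', Subtype.ext h⟩).symm
  · intro z
    obtain ⟨a, rfl⟩ := QuotientAddGroup.mk_surjective z
    refine ⟨Quot.mk _ ⟨Int.fract a, Int.fract_nonneg a, (Int.fract_lt_one a).le⟩, ?_⟩
    refine (coe_eq_coe_iff _ _).2 ⟨⌊a⌋, (Int.fract_add_floor a).symm⟩

instance : CompactSpace Circle01 := inferInstanceAs (CompactSpace (Quot _))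

/-- The homeomorphism from `[0,1]/(0 ∼ 1)` to `ℝ/ℤ`. -/
def circleHomeo : Circle01 ≃ₜ AddCircle (1 : ℝ) :=
  Continuous.homeoOfEquivCompactToT2 (f := Equiv.ofBijective _ circleFun_bijective)
    continuous_circleFun

lemma circleHomeo_mk (t : I) : circleHomeo (Quot.mk _ t) = ((t : ℝ) : AddCircle (1 : ℝ)) := rfl

/-- A map from a cube (with an extra time coordinate) to the circle lifts to `ℝ` with a prescribed value
at one point. -/
lemma exists_lift {m : ℕ} (h : (Fin m → I) × I → Circle01) (hh : Continuous h)
    (a₀ : (Fin m → I) × I) (r₀ : ℝ) (hr : (r₀ : AddCircle (1 : ℝ)) = circleHomeo (h a₀)) :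
    ∃ r : (Fin m → I) × I → ℝ, Continuous r ∧ r a₀ = r₀ ∧
      ∀ a, (r a : AddCircle (1 : ℝ)) = circleHomeo (h a) := by
  -- The lifting theorem wants a locally path connected domain, so the map is extended to a real
  -- vector space along the clamping retraction `c`.
  let c : (Fin m → ℝ) × ℝ → (Fin m → I) × I := fun v => (fun i => pr (v.1 i), pr v.2)
  let d : (Fin m → I) × I → (Fin m → ℝ) × ℝ := fun v => (fun i => v.1 i, v.2)
  have hc : Continuous c := by fun_prop
  have hd : Continuous d := by fun_prop
  have hcd : ∀ a, c (d a) = a := fun a => by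
    ext i <;> simp [c, d]
  have : Fact ((0 : ℝ) < 1) := ⟨one_pos⟩
  obtain ⟨F, ⟨hF0, hF⟩, -⟩ := (AddCircle.isCoveringMap_coe (1 : ℝ)).existsUnique_continuousMap_lifts
    ⟨fun v => circleHomeo (h (c v)), by fun_prop⟩ (d a₀) r₀ (by simp [hcd, hr])
  refine ⟨fun a => F (d a), by fun_prop, hF0, fun a => ?_⟩
  have := congrFun hF (d a)
  simpa [hcd] using this

end Circle

/-! ### The semiflow on the mapping torus -/

section Torus
variable {X : Type*} [TopologicalSpace X] (f : C(X, X))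

/-- The point `[(x, t)]` of the mapping torus, with `t` clamped to `[0,1]`. -/
def tmk (x : X) (t : ℝ) : MappingTorus f := Quot.mk _ (x, pr t)

variable {f}
lemma continuous_tmk : Continuous fun p : X × ℝ => tmk f p.1 p.2 :=
  continuous_quot_mk.comp (by fun_prop)

lemma tmk_one (x : X) : tmk f x 1 = tmk f (f x) 0 :=
  Quot.sound ⟨pr_one, pr_zero, rfl⟩

lemma exists_tmk (e : MappingTorus f) : ∃ x, ∃ t ∈ I, e = tmk f x t := by
  obtain ⟨x, t⟩ := e
  exact ⟨x, t, t.2, by rw [tmk, pr_coe]⟩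

variable (f) in
/-- The mapping torus projection, as a map to `ℝ/ℤ`. -/
def tproj (e : MappingTorus f) : AddCircle (1 : ℝ) := circleHomeo (mappingTorusProj f e)

lemma continuous_mappingTorusProj : Continuous (mappingTorusProj f) :=
  continuous_quot_lift _ (continuous_quot_mk.comp continuous_snd)

@[fun_prop]
lemma continuous_tproj : Continuous (tproj f) :=
  circleHomeo.continuous.comp continuous_mappingTorusProj

lemma tproj_tmk (x : X) {t : ℝ} (ht : t ∈ I) : tproj f (tmk f x t) = t := by
  rw [tmk, pr_of_mem ht]
  rfl

variable (f) in
/-- The trajectory of `[(x, 0)]` under the semiflow: at time `τ ≥ 0` it is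
`[(f^⌊τ⌋ x, τ - ⌊τ⌋)]`; at negative times it is constant. -/
def orbit (x : X) (τ : ℝ) : MappingTorus f := tmk f (f^[⌊τ⌋₊] x) (τ - ⌊τ⌋₊)

lemma orbit_add (x : X) (m : ℕ) {t : ℝ} (ht : t ∈ I) : orbit f x (t + m) = tmk f (f^[m] x) t := by
  rcases eq_or_lt_of_le ht.2 with rfl | h
  · have : ⌊(1 : ℝ) + m⌋₊ = m + 1 := by
      rw [show (1 : ℝ) + m = ((m + 1 : ℕ) : ℝ) by push_cast; ring, Nat.floor_natCast]
    rw [orbit, this, Function.iterate_succ_apply', tmk_one]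
    congr 1; push_cast; ring
  · have : ⌊t + m⌋₊ = m := by
      rw [Nat.floor_add_natCast ht.1, Nat.floor_eq_zero.2 h, zero_add]
    rw [orbit, this]
    congr 1; ring

lemma orbit_of_mem (x : X) {t : ℝ} (ht : t ∈ I) : orbit f x t = tmk f x t := by
  simpa using orbit_add x 0 ht

lemma exists_add_nat {τ : ℝ} (h : 0 ≤ τ) : ∃ t ∈ I, ∃ m : ℕ, τ = t + m :=
  ⟨τ - ⌊τ⌋₊, ⟨by linarith [Nat.floor_le h], by linarith [Nat.lt_floor_add_one τ]⟩, ⌊τ⌋₊, by ring⟩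

lemma orbit_add_one (x : X) {τ : ℝ} (h : 0 ≤ τ) : orbit f x (1 + τ) = orbit f (f x) τ := by
  obtain ⟨t, ht, m, rfl⟩ := exists_add_nat h
  rw [orbit_add _ _ ht, show 1 + (t + m) = t + ((m + 1 : ℕ) : ℝ) by push_cast; ring, orbit_add _ _ ht,
    Function.iterate_succ_apply]

lemma orbit_of_nonpos (x : X) {τ : ℝ} (h : τ ≤ 0) : orbit f x τ = tmk f x 0 := by
  rw [orbit, Nat.floor_of_nonpos h, tmk, tmk, Nat.cast_zero, sub_zero, pr_of_le h, pr_zero]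
  rfl

/-- Continuity up to time `n`, by induction: `orbit x` is a segment followed by `orbit (f x)`. -/
lemma continuous_orbit_min (n : ℕ) : Continuous fun p : X × ℝ => orbit f p.1 (min p.2 n) := by
  induction n with
  | zero =>
    have : (fun p : X × ℝ => orbit f p.1 (min p.2 (0 : ℕ))) = fun p => tmk f p.1 0 := by
      ext p
      exact orbit_of_nonpos _ (by simp)
    rw [this]
    exact continuous_tmk.comp (f := fun p : X × ℝ => (p.1, (0 : ℝ))) (by fun_prop)
  | succ n ih =>
    have : (fun p : X × ℝ => orbit f p.1 (min p.2 (n + 1 : ℕ))) = fun p =>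
        if p.2 ≤ 1 then tmk f p.1 p.2 else orbit f (f p.1) (min (p.2 - 1) n) := by
      ext p
      split_ifs with h
      · rw [min_eq_left (h.trans (by simp))]
        rcases le_total 0 p.2 with h0 | h0
        · exact orbit_of_mem _ ⟨h0, h⟩
        · rw [orbit_of_nonpos _ h0, tmk, tmk, pr_of_le h0, pr_zero]
      · rw [← orbit_add_one _ (le_min (by linarith) (Nat.cast_nonneg n)), ← min_add_add_left]
        congr 1; push_cast; ring_nf
    rw [this]
    refine Continuous.if_le continuous_tmk ?_ (by fun_prop) (by fun_prop) ?_
    · exact ih.comp (f := fun p : X × ℝ => (f p.1, p.2 - 1)) (by fun_prop)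
    · intro p hp
      rw [hp, tmk_one, orbit_of_nonpos _ (by simp)]

lemma continuous_orbit : Continuous fun p : X × ℝ => orbit f p.1 p.2 := by
  rw [continuous_iff_continuousAt]
  intro p
  obtain ⟨n, hn⟩ := exists_nat_gt p.2
  refine (continuous_orbit_min (f := f) n).continuousAt.congr ?_
  filter_upwards [(isOpen_lt continuous_snd continuous_const).mem_nhds hn] with q hq
  rw [min_eq_left (le_of_lt hq)]

variable (f) in
/-- The semiflow on the mapping torus, moving the circle coordinate forward at unit speed;
`s` is replaced by `max s 0`. -/
def flow (e : MappingTorus f) (s : ℝ) : MappingTorus f :=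
  Quot.lift (fun p : X × I => orbit f p.1 (p.2 + max s 0)) (by
    rintro ⟨a, t⟩ ⟨b, t'⟩ ⟨h1, h2, h3⟩
    simp only at h1 h2 h3
    subst h1 h2 h3
    simpa using orbit_add_one a (le_max_right s 0)) e

/-- Joint continuity holds because `ℝ` is locally compact: the semiflow is curried, so that it descends
to the quotient as a map to `C(ℝ, T_f)`. -/
@[fun_prop]
lemma continuous_flow : Continuous fun p : MappingTorus f × ℝ => flow f p.1 p.2 := by
  let F : MappingTorus f → C(ℝ, MappingTorus f) := Quot.lift
    (fun p : X × I => ContinuousMap.curry ⟨fun q : (X × I) × ℝ => orbit f q.1.1 (q.1.2 + max q.2 0),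
      continuous_orbit.comp (f := fun q : (X × I) × ℝ => (q.1.1, (q.1.2 + max q.2 0 : ℝ)))
        (by fun_prop)⟩ p) (by
    intro a b h
    ext s
    exact congrArg (fun e => flow f e s) (Quot.sound h))
  have hF : Continuous F := continuous_quot_lift _ (ContinuousMap.continuous _)
  have h2 : (fun p : MappingTorus f × ℝ => flow f p.1 p.2) = fun p => F p.1 p.2 := by
    ext ⟨⟨e⟩, s⟩
    rfl
  rw [h2]
  fun_prop

lemma flow_tmk (x : X) {t s : ℝ} (ht : t ∈ I) (hs : 0 ≤ s) :
    flow f (tmk f x t) s = orbit f x (t + s) := by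
  rw [tmk, pr_of_mem ht]
  show orbit f x (t + max s 0) = _
  rw [max_eq_left hs]

lemma flow_zero (e : MappingTorus f) : flow f e 0 = e := by
  obtain ⟨x, t, ht, rfl⟩ := exists_tmk e
  rw [flow_tmk _ ht le_rfl, add_zero, orbit_of_mem _ ht]

lemma tproj_orbit (x : X) {τ : ℝ} (h : 0 ≤ τ) : tproj f (orbit f x τ) = τ := by
  obtain ⟨t, ht, m, rfl⟩ := exists_add_nat h
  rw [orbit_add _ _ ht, tproj_tmk _ ht, coe_eq_coe_iff]
  exact ⟨m, by simp⟩

lemma tproj_flow (e : MappingTorus f) {s : ℝ} (hs : 0 ≤ s) :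
    tproj f (flow f e s) = tproj f e + s := by
  obtain ⟨x, t, ht, rfl⟩ := exists_tmk e
  rw [flow_tmk _ ht hs, tproj_orbit _ (add_nonneg ht.1 hs), tproj_tmk _ ht, AddCircle.coe_add]

lemma flow_nat (x : X) {t : ℝ} (ht : t ∈ I) (m : ℕ) :
    flow f (tmk f x t) m = tmk f (f^[m] x) t := by
  rw [flow_tmk _ ht (Nat.cast_nonneg m), orbit_add _ _ ht]

/-! ### Fibres of the projection -/

variable (f) in
/-- The fibre of the projection over the class of `t₀`. -/
def TFib (t₀ : ℝ) : Type _ := {e : MappingTorus f // tproj f e = (t₀ : AddCircle (1 : ℝ))}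

instance (t₀ : ℝ) : TopologicalSpace (TFib f t₀) := inferInstanceAs (TopologicalSpace (Subtype _))

variable (f) in
/-- The map `T_f → X` sending `[(x, t)]` to `x` if `t ≤ c` and to `f x` if `t > c`; it is continuous away
from the fibre over `c`. -/
def ret (c : ℝ) (hc : c ∈ Set.Ico 0 1) : MappingTorus f → X :=
  Quot.lift (fun p : X × I => if (p.2 : ℝ) ≤ c then p.1 else f p.1) (by
    rintro ⟨a, t⟩ ⟨b, t'⟩ ⟨h1, h2, h3⟩
    simp only at h1 h2 h3
    subst h1 h2 h3
    simp [hc.1, hc.2])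

lemma continuousOn_ret (c : ℝ) (hc : c ∈ Set.Ico 0 1) :
    ContinuousOn (ret f c hc) {e | tproj f e ≠ (c : AddCircle (1 : ℝ))} := by
  have hq : Topology.IsQuotientMap (Quot.mk (MappingTorusRel f) : X × I → MappingTorus f) :=
    isQuotientMap_quot_mk
  have ho : IsOpen {e | tproj f e ≠ (c : AddCircle (1 : ℝ))} :=
    isOpen_ne_fun continuous_tproj continuous_const
  refine (hq.continuousOn_isOpen_iff ho).2 ?_
  rintro ⟨a, t⟩ ht
  have htc : (t : ℝ) ≠ c := fun h => ht (congrArg (fun r : ℝ => (r : AddCircle (1 : ℝ))) h)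
  refine ContinuousAt.continuousWithinAt ?_
  rcases lt_or_gt_of_ne htc with h | h
  · refine (continuous_fst (X := X) (Y := I)).continuousAt.congr ?_
    filter_upwards [(isOpen_lt (continuous_subtype_val.comp continuous_snd)
      continuous_const).mem_nhds h] with p hp
    exact (if_pos (le_of_lt hp)).symm
  · refine (f.continuous.comp (continuous_fst (X := X) (Y := I))).continuousAt.congr ?_
    filter_upwards [(isOpen_lt continuous_const
      (continuous_subtype_val.comp continuous_snd)).mem_nhds h] with p hp
    exact (if_neg (not_le.2 hp)).symm

lemma ret_tmk (c : ℝ) (hc : c ∈ Set.Ico 0 1) (x : X) {t : ℝ} (ht : t ∈ I) (htc : t ≤ c) :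
    ret f c hc (tmk f x t) = x := by
  rw [tmk, pr_of_mem ht]
  exact if_pos htc

variable (f) in
/-- The fibre over `t₀ ∈ [0,1)` is homeomorphic to `X`. The inverse is `ret` cut at a level `c` with
`t₀ < c < 1`, which also sends `[(x, 1)] = [(f x, 0)]` to `f x` when `t₀ = 0`. -/
def fibHomeo {t₀ : ℝ} (ht : t₀ ∈ Set.Ico 0 1) : X ≃ₜ TFib f t₀ where
  toFun x := ⟨tmk f x t₀, tproj_tmk x ⟨ht.1, ht.2.le⟩⟩
  invFun e := ret f ((t₀ + 1) / 2) ⟨by linarith [ht.1], by linarith [ht.2]⟩ e.1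
  left_inv x := ret_tmk _ _ x ⟨ht.1, ht.2.le⟩ (by linarith [ht.2])
  right_inv := by
    rintro ⟨e, he⟩
    obtain ⟨x, t, htI, rfl⟩ := exists_tmk e
    refine Subtype.ext ?_
    have ht0 : t₀ ∈ I := ⟨ht.1, ht.2.le⟩
    rw [tproj_tmk _ htI] at he
    rcases coe_eq_coe_cases htI ht0 he with rfl | ⟨rfl, rfl⟩ | ⟨-, rfl⟩
    · exact congrArg (fun z => tmk f z t) (ret_tmk _ _ x htI (by linarith [ht.2]))
    · exact (congrArg (fun z => tmk f z 0) ((congrArg (ret f _ _) (tmk_one x)).trans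
        (ret_tmk _ _ _ ht0 (by norm_num)))).trans (tmk_one x).symm
    · exact absurd ht.2 (lt_irrefl _)
  continuous_toFun := by
    refine Continuous.subtype_mk ?_ _
    exact continuous_tmk.comp (f := fun x : X => (x, t₀)) (by fun_prop)
  continuous_invFun := by
    refine (continuousOn_ret _ _).comp_continuous continuous_subtype_val ?_
    rintro ⟨e, he⟩ h
    simp only at h
    rw [he] at h
    rcases coe_eq_coe_cases ⟨ht.1, ht.2.le⟩ ⟨by linarith [ht.1], by linarith [ht.2]⟩ h with h | ⟨h, h'⟩ | ⟨h, h'⟩ <;>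
    linarith [ht.1, ht.2]

/-- The time `m` semiflow, as a self-map of a fibre. -/
def fibFlow (t₀ : ℝ) (m : ℕ) : C(TFib f t₀, TFib f t₀) where
  toFun e := ⟨flow f e.1 m, by
    rw [tproj_flow _ (Nat.cast_nonneg m), e.2, ← AddCircle.coe_add, eq_comm, coe_eq_coe_iff]
    exact ⟨m, by simp⟩⟩
  continuous_toFun := by
    refine Continuous.subtype_mk ?_ _
    exact continuous_flow.comp (continuous_subtype_val.prodMk continuous_const)

/-! ### Unrolling the mapping torus -/

/-- The map `φ` has a homotopy inverse. -/
def IsHEquiv {X Y : Type*} [TopologicalSpace X] [TopologicalSpace Y] (φ : C(X, Y)) : Prop :=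
  ∃ g : C(Y, X), (g.comp φ).Homotopic (ContinuousMap.id X) ∧
      (φ.comp g).Homotopic (ContinuousMap.id Y)

section
variable {X Y Z : Type*} [TopologicalSpace X] [TopologicalSpace Y] [TopologicalSpace Z]

lemma IsHEquiv.comp {ψ : C(Y, Z)} {φ : C(X, Y)} (hψ : IsHEquiv ψ) (hφ : IsHEquiv φ) :
    IsHEquiv (ψ.comp φ) := by
  obtain ⟨a, a1, a2⟩ := hψ
  obtain ⟨b, b1, b2⟩ := hφ
  refine ⟨b.comp a, ?_, ?_⟩
  · exact (((ContinuousMap.Homotopic.refl b).comp (a1.comp (.refl φ))) : _).trans b1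
  · exact (((ContinuousMap.Homotopic.refl ψ).comp (b2.comp (.refl a))) : _).trans a2

lemma IsHEquiv.congr {φ ψ : C(X, Y)} (hφ : IsHEquiv φ) (h : φ.Homotopic ψ) : IsHEquiv ψ := by
  obtain ⟨a, a1, a2⟩ := hφ
  exact ⟨a, ((ContinuousMap.Homotopic.refl a).comp h.symm).trans a1,
    (h.symm.comp (.refl a)).trans a2⟩

lemma Homeomorph.isHEquiv (e : X ≃ₜ Y) : IsHEquiv (e : C(X, Y)) :=
  ⟨(e.symm : C(Y, X)), by simp [ContinuousMap.Homotopic.refl], by simp [ContinuousMap.Homotopic.refl]⟩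

end

lemma isHEquiv_iterate (hf : IsHEquiv f) (m : ℕ) : ∃ φ : C(X, X), IsHEquiv φ ∧ ⇑φ = f^[m] := by
  induction m with
  | zero => exact ⟨.id X, ⟨.id X, .refl _, .refl _⟩, rfl⟩
  | succ m ih =>
    obtain ⟨φ, h, h'⟩ := ih
    exact ⟨φ.comp f, h.comp hf, by rw [Function.iterate_succ, ← h']; rfl⟩

/-- Under `fibHomeo` the time `m` semiflow on a fibre is `f^m`. -/
lemma isHEquiv_fibFlow (hf : IsHEquiv f) {t₀ : ℝ} (ht : t₀ ∈ Set.Ico 0 1) (m : ℕ) :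
    IsHEquiv (fibFlow (f := f) t₀ m) := by
  obtain ⟨φ, h, h'⟩ := isHEquiv_iterate hf m
  have := ((fibHomeo f ht).isHEquiv.comp h).comp (fibHomeo f ht).symm.isHEquiv
  convert! this using 1
  ext e
  obtain ⟨x, rfl⟩ := (fibHomeo f ht).surjective e
  refine Subtype.ext ?_
  simp [h']
  exact flow_nat x ⟨ht.1, ht.2.le⟩ m

variable (f) in
/-- The part over `(-∞, c]` of the pullback of the mapping torus along the universal cover
`ℝ → S¹`. -/
def Unrolled (c : ℝ) : Type _ :=
  {w : MappingTorus f × ℝ // tproj f w.1 = (w.2 : AddCircle (1 : ℝ)) ∧ w.2 ≤ c}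

instance (c : ℝ) : TopologicalSpace (Unrolled f c) := inferInstanceAs (TopologicalSpace (Subtype _))

/-- The inclusion of the fibre in the unrolled mapping torus at level `t₀ + k`. -/
def fibIncl (t₀ : ℝ) {k : ℤ} {N : ℕ} (hk : k ≤ N) : C(TFib f t₀, Unrolled f (t₀ + N)) where
  toFun e := ⟨(e.1, t₀ + k), by rw [e.2, coe_eq_coe_iff]; exact ⟨k, rfl⟩, by
    have : (k : ℝ) ≤ N := by exact_mod_cast hk
    simpa using this⟩
  continuous_toFun := by
    refine Continuous.subtype_mk ?_ _
    exact continuous_subtype_val.prodMk continuous_const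

/-- Flowing the unrolled mapping torus up to its top level `t₀ + N`. -/
def flowTop (t₀ : ℝ) (N : ℕ) : C(Unrolled f (t₀ + N), TFib f t₀) where
  toFun w := ⟨flow f w.1.1 (t₀ + N - w.1.2), by
    rw [tproj_flow _ (by linarith [w.2.2]), w.2.1, ← AddCircle.coe_add, eq_comm, coe_eq_coe_iff]
    exact ⟨N, by simp⟩⟩
  continuous_toFun := by
    refine Continuous.subtype_mk ?_ _
    refine continuous_flow.comp (f := fun w : Unrolled f (t₀ + N) => (w.1.1, t₀ + N - w.1.2)) ?_
    have : Continuous fun w : Unrolled f (t₀ + N) => w.1 := continuous_subtype_val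
    fun_prop

lemma flowTop_homotopic (t₀ : ℝ) (N : ℕ) :
    ((fibIncl (f := f) t₀ (k := N) le_rfl).comp (flowTop t₀ N)).Homotopic (.id _) := by
  refine ContinuousMap.Homotopic.symm ⟨⟨⟨fun v => ⟨(flow f v.2.1.1 (v.1 * (t₀ + N - v.2.1.2)),
    v.2.1.2 + v.1 * (t₀ + N - v.2.1.2)), ?_, ?_⟩, ?_⟩, ?_, ?_⟩⟩
  · have h1 := v.2.2.2
    rw [tproj_flow _ (mul_nonneg v.1.2.1 (by linarith)), v.2.2.1, AddCircle.coe_add]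
  · have h1 := v.2.2.2
    have h2 := mul_le_mul_of_nonneg_right v.1.2.2 (show 0 ≤ t₀ + N - v.2.1.2 by linarith)
    simp only
    linarith
  · refine Continuous.subtype_mk ?_ _
    have : Continuous fun v : I × Unrolled f (t₀ + N) => v.2.1 := continuous_subtype_val.comp continuous_snd
    refine Continuous.prodMk (continuous_flow.comp (f := fun v : I × Unrolled f (t₀ + N) =>
      (v.2.1.1, (v.1 * (t₀ + N - v.2.1.2) : ℝ))) ?_) ?_ <;> fun_prop
  · intro w
    refine Subtype.ext (Prod.ext ?_ ?_)
    · simp [flow_zero]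
    · simp
  · intro w
    refine Subtype.ext (Prod.ext ?_ ?_)
    · show flow f w.1.1 (((1 : I) : ℝ) * (t₀ + N - w.1.2)) = flow f w.1.1 (t₀ + N - w.1.2)
      simp
    · show w.1.2 + ((1 : I) : ℝ) * (t₀ + N - w.1.2) = t₀ + ((N : ℤ) : ℝ)
      push_cast; ring

/-- The level `t₀ + k` inclusion is homotopic to the time `N - k` semiflow followed by the inclusion at
the top level. -/
lemma isHEquiv_fibIncl (hf : IsHEquiv f) {t₀ : ℝ} (ht : t₀ ∈ Set.Ico 0 1) {k : ℤ} {N : ℕ} (hk : k ≤ N) :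
    IsHEquiv (fibIncl (f := f) t₀ hk) := by
  have htop : IsHEquiv (fibIncl (f := f) t₀ (k := N) (N := N) le_rfl) := by
    refine ⟨flowTop t₀ N, ?_, flowTop_homotopic t₀ N⟩
    convert! ContinuousMap.Homotopic.refl _ using 1
    ext e
    refine Subtype.ext ?_
    show e.1 = flow f e.1 (t₀ + N - (t₀ + ((N : ℤ) : ℝ)))
    simp [flow_zero]
  obtain ⟨m, hm⟩ := Int.le.dest hk
  refine (htop.comp (isHEquiv_fibFlow hf ht m)).congr ?_
  have h := (flowTop_homotopic (f := f) t₀ N).comp (.refl (fibIncl t₀ hk))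
  convert! h using 1
  ext e
  refine Subtype.ext (Prod.ext ?_ rfl)
  have : (k : ℝ) + m = N := by exact_mod_cast hm
  show flow f e.1 m = flow f e.1 (t₀ + N - (t₀ + k))
  rw [← this]
  congr 1; ring

end Torus

/-! ### Relative loops in the mapping torus -/

section Main
variable {X : Type*} [TopologicalSpace X] {f : C(X, X)}

/-- A lift to `ℝ` of a map sending the boundary of the cube to a single point of the circle is constant
on each face: along a segment in a face its values form a connected subset of a translate
of `ℤ`. -/
lemma eq_of_segment {n : ℕ} {t₀ : ℝ} {r : (Fin (n + 1) → I) × I → ℝ} (hr : Continuous r)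
    (hb : ∀ t s, (∃ i, t i = 0 ∨ t i = 1) → (r (t, s) : AddCircle (1 : ℝ)) = t₀)
    {i : Fin (n + 1)} {t t' : Fin (n + 1) → I} (hi : t i = 0 ∨ t i = 1) (ht : t' i = t i)
    (s s' : I) : r (t, s) = r (t', s') := by
  let c : I → (Fin (n + 1) → I) × I := fun u =>
    (fun j => pr (t j + u * (t' j - t j)), pr (s + u * (s' - s)))
  have hc : Continuous c := by fun_prop
  have hm : Set.MapsTo (fun u => r (c u) - t₀) Set.univ (Set.range ((↑) : ℤ → ℝ)) := by
    intro u _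
    have h1 := hb (c u).1 (c u).2 ⟨i, by simpa [c, ht] using hi⟩
    obtain ⟨k, hk⟩ := (coe_eq_coe_iff _ _).1 h1.symm
    refine ⟨k, ?_⟩
    show (k : ℝ) = r (c u) - t₀
    rw [Prod.mk.eta] at hk
    rw [hk]; ring
  have : DiscreteTopology (Set.range ((↑) : ℤ → ℝ)) :=
    Int.isClosedEmbedding_coe_real.isEmbedding.toHomeomorph.symm.isEmbedding.discreteTopology
  have h := isPreconnected_univ.constant_of_mapsTo ⟨this⟩
    (hr.comp hc |>.sub continuous_const).continuousOn hm
    (Set.mem_univ (0 : I)) (Set.mem_univ (1 : I))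
  simpa [c] using h

/-- The face `t 0 = 0` may lie on a different level `t₀ + k` from the rest of the boundary, but only for
`n = 0`, where it does not meet the rest of the boundary. -/
lemma lift_faces {n : ℕ} {t₀ : ℝ} {r : (Fin (n + 1) → I) × I → ℝ} (hr : Continuous r)
    (hb : ∀ t s, (∃ i, t i = 0 ∨ t i = 1) → (r (t, s) : AddCircle (1 : ℝ)) = t₀)
    (h1 : r (1, 0) = t₀) :
    ∃ k : ℤ, (∀ t s, t 0 = 0 → r (t, s) = t₀ + k) ∧
      (∀ t s, (t 0 = 1 ∨ ∃ i : Fin (n + 1), i ≠ 0 ∧ (t i = 0 ∨ t i = 1)) → r (t, s) = t₀) ∧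
      (n ≠ 0 → k = 0) := by
  obtain ⟨k, hk⟩ := (coe_eq_coe_iff _ _).1 (hb 0 0 ⟨0, .inl rfl⟩).symm
  have hJ1 : ∀ t s, t 0 = 1 → r (t, s) = t₀ := fun t s h =>
    (eq_of_segment hr hb (i := 0) (t' := 1) (.inr h) h.symm s 0).trans h1
  have hJ : ∀ t s, (t 0 = 1 ∨ ∃ i : Fin (n + 1), i ≠ 0 ∧ (t i = 0 ∨ t i = 1)) → r (t, s) = t₀ := by
    rintro t s (h | ⟨i, hi, h⟩)
    · exact hJ1 t s h
    · exact (eq_of_segment hr hb (i := i) (t' := Function.update t 0 1) h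
        (Function.update_of_ne hi _ _) s s).trans (hJ1 _ _ (Function.update_self _ _ _))
  refine ⟨k, fun t s h => ?_, hJ, fun hn => ?_⟩
  · exact (eq_of_segment hr hb (i := 0) (t' := 0) (.inl h) h.symm s 0).trans hk
  · have h2 := hJ 0 0 (.inr ⟨Fin.last n, by simpa [Fin.ext_iff] using hn, .inl rfl⟩)
    rw [h2] at hk
    have : (k : ℝ) = 0 := by linarith
    exact_mod_cast this

lemma exists_nat_bound {n : ℕ} (t₀ : ℝ) (k : ℤ) {r : (Fin (n + 1) → I) × I → ℝ}
    (hr : Continuous r) : ∃ N : ℕ, k ≤ N ∧ ∀ a, r a ≤ t₀ + N := by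
  obtain ⟨M, hM⟩ := (isCompact_range hr).bddAbove
  refine ⟨max k.toNat ⌈M - t₀⌉₊, ?_, fun a => ?_⟩
  · exact (Int.self_le_toNat k).trans (by exact_mod_cast le_max_left _ _)
  · have h1 := hM (Set.mem_range_self a)
    have h2 := Nat.le_ceil (M - t₀)
    have h3 : (⌈M - t₀⌉₊ : ℝ) ≤ (max k.toNat ⌈M - t₀⌉₊ : ℕ) := by exact_mod_cast le_max_right _ _
    linarith

variable (f) in
/-- The base point `x` at level `t₀` of the unrolled mapping torus. -/
def basePt {t₀ : ℝ} {x : MappingTorus f} (hx : tproj f x = (t₀ : AddCircle (1 : ℝ))) (N : ℕ) :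
    Unrolled f (t₀ + N) :=
  ⟨(x, t₀), hx, by simp⟩

lemma contractible_hFib_fibIncl (hf : IsHEquiv f) {t₀ : ℝ} (ht : t₀ ∈ Set.Ico 0 1) {k : ℤ} {N : ℕ}
    (hk : k ≤ N) (b : Unrolled f (t₀ + N)) : ContractibleSpace (HFib (fibIncl (f := f) t₀ hk) b) := by
  obtain ⟨γ, K, L⟩ := isHEquiv_fibIncl hf ht hk
  exact contractible_hFib _ γ K L b

/-- A map `g` on the `(n+1)`-cube with a lift `ρ` of its projection, viewed as a family of paths in the
first coordinate, is a map from the `n`-cube to the homotopy fibre of the level `t₀ + k`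
inclusion. -/
lemma exists_hFib_map {n : ℕ} {t₀ : ℝ} {x : MappingTorus f}
    (hx : tproj f x = (t₀ : AddCircle (1 : ℝ))) {k : ℤ} {N : ℕ} (hk : k ≤ N)
    {g : (Fin (n + 1) → I) → MappingTorus f} (hg : Continuous g)
    {ρ : (Fin (n + 1) → I) → ℝ} (hρ : Continuous ρ)
    (hgρ : ∀ t, tproj f (g t) = (ρ t : AddCircle (1 : ℝ))) (hN : ∀ t, ρ t ≤ t₀ + N)
    (h0 : ∀ t, t 0 = 0 → ρ t = t₀ + k) (h1 : ∀ t, t 0 = 1 → ρ t = t₀ ∧ g t = x) :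
    ∃ e : C(Fin n → I, HFib (fibIncl (f := f) t₀ hk) (basePt f hx N)),
      (∀ t, (e t).pt.1 = g (Fin.cons 0 t)) ∧
      ∀ t u, ((e t).path u).1 = (g (Fin.cons u t), ρ (Fin.cons u t)) := by
  have hc : Continuous fun z : (Fin n → I) × I => (Fin.cons z.2 z.1 : Fin (n + 1) → I) := by
    refine continuous_pi fun i => ?_
    refine Fin.cases ?_ (fun j => ?_) i <;> simp only [Fin.cons_zero, Fin.cons_succ] <;> fun_prop
  refine ⟨HFib.mk' (fun t => ⟨g (Fin.cons 0 t), ?_⟩) ?_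
    (fun z => ⟨(g (Fin.cons z.2 z.1), ρ (Fin.cons z.2 z.1)), hgρ _, hN _⟩) ?_ ?_ ?_,
    fun _ => rfl, fun _ _ => rfl⟩
  · rw [hgρ, h0 _ (Fin.cons_zero _ _), eq_comm, coe_eq_coe_iff]
    exact ⟨k, rfl⟩
  · refine Continuous.subtype_mk ?_ _
    exact hg.comp (hc.comp (f := fun t => (t, (0 : I))) (by fun_prop))
  · refine Continuous.subtype_mk ?_ _
    exact (hg.comp hc).prodMk (hρ.comp hc)
  · intro z
    exact Subtype.ext (Prod.ext rfl (h0 _ (Fin.cons_zero _ _)))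
  · intro z
    have := h1 (Fin.cons 1 z) (Fin.cons_zero _ _)
    exact Subtype.ext (Prod.ext this.2 this.1)

lemma mem_fibre_iff {t₀ : ℝ} {y : Circle01} (hy : circleHomeo y = (t₀ : AddCircle (1 : ℝ)))
    (e : MappingTorus f) :
    e ∈ mappingTorusProj f ⁻¹' {y} ↔ tproj f e = (t₀ : AddCircle (1 : ℝ)) := by
  rw [← hy]
  exact circleHomeo.injective.eq_iff.symm

/-- Surjectivity on homotopy classes. -/
lemma exists_relGenLoop (hf : IsHEquiv f) {t₀ : ℝ} (ht : t₀ ∈ Set.Ico 0 1) {y : Circle01}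
    (hy : circleHomeo y = (t₀ : AddCircle (1 : ℝ))) {x : MappingTorus f}
    (hx : mappingTorusProj f x = y) (n : ℕ) (g : (Fin (n + 1) → I) → Circle01)
    (hg : IsGenLoopAt n g y) :
    ∃ g' : RelGenLoop n (MappingTorus f) (mappingTorusProj f ⁻¹' {y}) x,
      GenLoopHomotopic n (mappingTorusProj f ∘ g'.toFun) g y := by
  obtain ⟨hgc, hgb⟩ := hg
  have hx' := (mem_fibre_iff hy x).1 hx
  obtain ⟨r, hr, hr1, hrl⟩ := exists_lift (fun a => g a.1) (by fun_prop) (1, 0) t₀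
    (by rw [hgb 1 ⟨0, .inr rfl⟩, hy])
  obtain ⟨k, hk0, hkJ, hkn⟩ := lift_faces (t₀ := t₀) hr
    (fun t s h => by rw [hrl, hgb t h, hy]) hr1
  obtain ⟨N, hkN, -⟩ := exists_nat_bound t₀ k hr
  -- For `n = 0` any path down or up from level `t₀ + k` to the base point will do; it exists because
  -- the homotopy fibre is nonempty.
  obtain ⟨w, hw⟩ : ∃ w : HFib (fibIncl (f := f) t₀ hkN) (basePt f hx' N),
      n ≠ 0 → ∀ u, w.path u = basePt f hx' N := by
    by_cases hn : n = 0
    · have := contractible_hFib_fibIncl hf ht hkN (basePt f hx' N)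
      exact ⟨Classical.arbitrary _, fun h => absurd hn h⟩
    · refine ⟨⟨(⟨x, hx'⟩, .const _ (basePt f hx' N)), ?_, rfl⟩, fun _ _ => rfl⟩
      refine Subtype.ext (Prod.ext rfl ?_)
      show t₀ = t₀ + k
      simp [hkn hn]
  have hw0 : (w.path 0).1 = (w.pt.1, t₀ + k) := congrArg Subtype.val w.path_zero
  have hwJ : ∀ t : Fin (n + 1) → I, (t 0 = 1 ∨ ∃ i : Fin (n + 1), i ≠ 0 ∧ (t i = 0 ∨ t i = 1)) →
      (w.path (t 0)).1 = (x, t₀) := by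
    rintro t (h | ⟨i, hi, -⟩)
    · rw [h, w.path_one]; rfl
    · rw [hw]
      · rfl
      · rintro rfl
        exact hi (Fin.eq_zero i)
  have hwc : Continuous fun t : Fin (n + 1) → I => (w.path (t 0)).1 :=
    continuous_subtype_val.comp (by fun_prop)
  refine ⟨⟨fun t => (w.path (t 0)).1.1, continuous_fst.comp hwc, fun t h => ?_,
    fun t h => by rw [hwJ t h]⟩, ?_⟩
  · rw [h, mem_fibre_iff hy, hw0]
    exact w.pt.2
  · refine ⟨fun a => circleHomeo.symm
      (((1 - a.2) * (w.path (a.1 0)).1.2 + a.2 * r (a.1, 0) : ℝ) : AddCircle (1 : ℝ)), ?_, ?_, ?_, ?_⟩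
    · have h1 : Continuous fun a : (Fin (n + 1) → I) × I => (w.path (a.1 0)).1.2 :=
        (continuous_snd.comp hwc).comp continuous_fst
      refine circleHomeo.symm.continuous.comp ((AddCircle.continuous_mk' 1).comp ?_)
      fun_prop
    · intro t
      rw [Homeomorph.symm_apply_eq]
      simpa [tproj] using (w.path (t 0)).2.1.symm
    · intro t
      rw [Homeomorph.symm_apply_eq]
      simpa using hrl (t, 0)
    · intro t s h
      have hb : (w.path (t 0)).1.2 = r (t, 0) := by
        by_cases h0 : t 0 = 0
        · rw [h0, hw0, hk0 t 0 h0]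
        · have hJ : t 0 = 1 ∨ ∃ i : Fin (n + 1), i ≠ 0 ∧ (t i = 0 ∨ t i = 1) := by
            obtain ⟨i, hi⟩ := h
            by_cases hi0 : i = 0
            · subst hi0
              exact .inl (hi.resolve_left h0)
            · exact .inr ⟨i, hi0, hi⟩
          rw [hwJ t hJ, hkJ t 0 hJ]
      rw [Homeomorph.symm_apply_eq, hb, ← hgb t h, ← hrl (t, 0)]
      congr 1
      ring

/-- Injectivity on homotopy classes. -/
lemma relGenLoop_homotopic (hf : IsHEquiv f) {t₀ : ℝ} (ht : t₀ ∈ Set.Ico 0 1) {y : Circle01}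
    (hy : circleHomeo y = (t₀ : AddCircle (1 : ℝ))) {x : MappingTorus f}
    (hx : mappingTorusProj f x = y) (n : ℕ)
    (g₁ g₂ : RelGenLoop n (MappingTorus f) (mappingTorusProj f ⁻¹' {y}) x)
    (h : GenLoopHomotopic n (mappingTorusProj f ∘ g₁.toFun) (mappingTorusProj f ∘ g₂.toFun) y) :
    g₁.Homotopic g₂ := by
  obtain ⟨h, hc, hh0, hh1, hhb⟩ := h
  have hx' := (mem_fibre_iff hy x).1 hx
  obtain ⟨r, hr, hr1, hrl⟩ := exists_lift h hc (1, 0) t₀ (by rw [hhb 1 0 ⟨0, .inr rfl⟩, hy])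
  obtain ⟨k, hk0, hkJ, -⟩ := lift_faces (t₀ := t₀) hr
    (fun t s h => by rw [hrl, hhb t s h, hy]) hr1
  obtain ⟨N, hkN, hN⟩ := exists_nat_bound t₀ k hr
  have := contractible_hFib_fibIncl hf ht hkN (basePt f hx' N)
  have key : ∀ (g : RelGenLoop n (MappingTorus f) (mappingTorusProj f ⁻¹' {y}) x) (s : I),
      (∀ t, h (t, s) = mappingTorusProj f (g.toFun t)) →
      ∃ e : C(Fin n → I, HFib (fibIncl (f := f) t₀ hkN) (basePt f hx' N)),
      (∀ t u, ((e t).path u).1.1 = g.toFun (Fin.cons u t)) ∧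
      ∀ t ∈ Cube.boundary (Fin n), (e t).pt.1 = x ∧ ∀ u, ((e t).path u).1 = (x, t₀) := by
    intro g s hs
    obtain ⟨e, e1, e2⟩ := exists_hFib_map (n := n) hx' hkN g.continuous_toFun
      (ρ := fun t => r (t, s)) (by fun_prop) (fun t => by rw [hrl, hs]; rfl) (fun t => hN _)
      (fun t h => hk0 t s h) (fun t h => ⟨hkJ t s (.inl h), g.jboundary_eq t (.inl h)⟩)
    have hJ : ∀ t ∈ Cube.boundary (Fin n), ∀ u : I, ∃ i : Fin (n + 1), i ≠ 0 ∧
        ((Fin.cons u t : Fin (n + 1) → I) i = 0 ∨ (Fin.cons u t : Fin (n + 1) → I) i = 1) := by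
      rintro t ⟨i, hi⟩ u
      exact ⟨i.succ, Fin.succ_ne_zero i, by simpa using hi⟩
    refine ⟨e, fun t u => by rw [e2], fun t ht => ⟨?_, fun u => ?_⟩⟩
    · rw [e1, g.jboundary_eq _ (.inr (hJ t ht 0))]
    · rw [e2, g.jboundary_eq _ (.inr (hJ t ht u))]
      exact Prod.ext rfl (hkJ _ s (.inr (hJ t ht u)))
  obtain ⟨e₁, e₁p, e₁b⟩ := key g₁ 0 hh0
  obtain ⟨e₂, e₂p, e₂b⟩ := key g₂ 1 hh1
  -- For `n = 0` the boundary of the `n`-cube is empty and `z` is arbitrary.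
  obtain ⟨z, hz₁, hz₂⟩ : ∃ z, (∀ t ∈ Cube.boundary (Fin n), e₁ t = z) ∧
      ∀ t ∈ Cube.boundary (Fin n), e₂ t = z := by
    rcases (Cube.boundary (Fin n)).eq_empty_or_nonempty with hB | ⟨t', ht'⟩
    · exact ⟨e₁ 0, by simp [hB], by simp [hB]⟩
    · have hu : ∀ w w' : HFib (fibIncl (f := f) t₀ hkN) (basePt f hx' N),
          (w.pt.1 = x ∧ ∀ u, (w.path u).1 = (x, t₀)) →
          (w'.pt.1 = x ∧ ∀ u, (w'.path u).1 = (x, t₀)) → w = w' := fun w w' hw hw' =>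
        HFib.ext' (Subtype.ext (hw.1.trans hw'.1.symm))
          fun u => Subtype.ext ((hw.2 u).trans (hw'.2 u).symm)
      exact ⟨e₁ t', fun t h => hu _ _ (e₁b t h) (e₁b t' ht'),
        fun t h => hu _ _ (e₂b t h) (e₁b t' ht')⟩
  obtain ⟨G⟩ := homotopicRel_of_contractible e₁ e₂ hz₁ hz₂
  have htail : Continuous fun t : Fin (n + 1) → I => Fin.tail t := by
    unfold Fin.tail; fun_prop
  refine ⟨fun a => ((G (a.2, Fin.tail a.1)).path (a.1 0)).1.1, ?_, ?_, ?_, ?_, ?_⟩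
  · refine continuous_fst.comp (continuous_subtype_val.comp ?_)
    fun_prop
  · intro t
    simp only [ContinuousMap.HomotopyWith.apply_zero]
    rw [e₁p, Fin.cons_self_tail]
  · intro t
    simp only [ContinuousMap.HomotopyWith.apply_one]
    rw [e₂p, Fin.cons_self_tail]
  · intro t s h0
    rw [mem_fibre_iff hy]
    simp only [h0, HFib.path_zero]
    exact (G (s, Fin.tail t)).pt.2
  · rintro t s (h1 | ⟨i, hi, hit⟩)
    · simp only [h1, HFib.path_one]
      rfl
    · obtain ⟨j, rfl⟩ := Fin.exists_succ_eq.2 hi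
      have hj : Fin.tail t ∈ Cube.boundary (Fin n) := ⟨j, hit⟩
      simp only [G.eq_fst s hj, (e₁b _ hj).2]

lemma exists_base (y : Circle01) : ∃ t₀ ∈ Set.Ico (0 : ℝ) 1,
    circleHomeo y = (t₀ : AddCircle (1 : ℝ)) := by
  obtain ⟨a, ha⟩ := QuotientAddGroup.mk_surjective (circleHomeo y)
  refine ⟨Int.fract a, ⟨Int.fract_nonneg a, Int.fract_lt_one a⟩, ?_⟩
  rw [← ha]
  exact ((coe_eq_coe_iff _ _).2 ⟨⌊a⌋, (Int.fract_add_floor a).symm⟩).symm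

end Main

/-- If `f : X → X` is a continuous map which is a homotopy equivalence, then
the mapping torus projection `T_f → S¹` is (continuous and) a quasifibration. -/
theorem mappingTorusProj_isQuasifibration {X : Type*} [TopologicalSpace X] (f : C(X, X))
    (hf : ∃ g : C(X, X), (g.comp f).Homotopic (ContinuousMap.id X) ∧
      (f.comp g).Homotopic (ContinuousMap.id X)) :
    Continuous (mappingTorusProj (⇑f)) ∧ IsQuasifibration (mappingTorusProj (⇑f)) := by
  refine ⟨continuous_mappingTorusProj, fun n y x hx => ?_⟩
  obtain ⟨t₀, ht, hy⟩ := exists_base y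
  exact ⟨exists_relGenLoop hf ht hy hx n, relGenLoop_homotopic hf ht hy hx n⟩
end
end

section
/- Let X be a topological space and f_1, …, f_n : X → X continuous maps, each of which is a homotopy equivalence. Let K be the space obtained by gluing the mapping tori T_{f_1}, …, T_{f_n} along their common subspace X × {0}. Then the map F : K → ⋁_{j=1}^n S¹_j obtained by gluing the mapping torus projections T_{f_j} → S¹_j (where S¹_j is a copy of S¹ and the wedge identifies the points corresponding to 0) is a quasifibration. -/
/-!
The map `F : K → ⋁ S¹` need not have any covering homotopy property itself: a mapping torus is
locally trivial only away from the points where the gluing by `f j` takes place.  It is therefore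
compared with a space `AuxSp f` over the wedge in which `X × [0,1]` is replaced by
`PathSp (f j) × [0,1]`, where `PathSp (f j)` is the mapping path space of pairs of a point `x` and
a path starting at `f j x`.  Its ends are glued to `X` by the base point `src` of such a pair and
by the end point `tgt` of the path.

*The auxiliary space is good.*  The map `src` is always shrinkable.  The map `tgt` is a fibration,
and a homotopy equivalence because `f j` is one, hence it is shrinkable as well: it has a section
`τ` and a homotopy over `X` from the identity to `τ ∘ tgt` (`PathSp.nonempty_shrinking`).
Consequently `AuxSp f` is, as a space over the wedge, dominated by a product over each member of a
finite open cover, formed by the neighbourhood of the wedge point left by removing the midpoints of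
the circles, and by the open arcs (`AuxSp.dominated`).  Such a locally dominated map has a weak
covering homotopy property (`weak_covering_homotopy`): homotopies defined on a compact metric space
can be lifted after a reparametrization of time, where the lift is kept constant over points at
which the homotopy is stationary.  This is Dold's theorem in the form needed here; all parameter
spaces are cubes, so a Lebesgue number argument replaces partitions of unity.

*The comparison.*  The constant paths give a map `toAux : K → AuxSp f` over the wedge.  In the other
direction, on the interval from `t₀` to `1` one first moves through `X` and then runs along the
path, which gives a map `ofAux : AuxSp f → K` covering a map of the wedge homotopic to the identity.
That homotopy, `squashMap`, lifts to `K` and is stationary over the point `y` with coordinate `t₀`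
at which the homotopy groups are based (`GluedMappingTori.comparison`).  This makes it possible
to transfer lifts from `AuxSp f` to `K`.

*The conclusion.*  A map of the cube into the wedge which is `y` on the boundary is a homotopy in
its first coordinate and starts at a constant map; lifting it to `AuxSp f` and mapping the lift to
`K` shows that relative homotopy classes of `(K, F⁻¹(y))` surject onto homotopy classes
(`Comparison.surjective`).  For injectivity, a homotopy between
`F ∘ f₁` and `F ∘ f₂` is lifted in the same way.  The lift is prescribed at its two ends, by `f₁`
and `f₂`, and on the face of the cube between them, where everything is constant
(`Comparison.injective`).
-/

/-!
Statement 0: For a continuous map `f : X → X` which is a homotopy equivalence, the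
mapping torus projection `T_f → S¹` is a quasifibration.
-/

open unitInterval

noncomputable section

/-- The relation on `X × [0,1] × Fin m` generating the space obtained by gluing the mapping
tori of the maps `f j` along `X × {0}`:  `(x, 1, j) ∼ (f j x, 0, j)` (the mapping torus
identification in the `j`-th torus) and `(x, 0, j) ∼ (x, 0, k)` (the gluing along `X × {0}`). -/
def GluedToriRel {X : Type*} {m : ℕ} (f : Fin m → X → X) :
    X × I × Fin m → X × I × Fin m → Prop := fun a b =>
  (a.2.1 = 1 ∧ b.2.1 = 0 ∧ b.1 = f a.2.2 a.1 ∧ b.2.2 = a.2.2) ∨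
  (a.2.1 = 0 ∧ b.2.1 = 0 ∧ b.1 = a.1)

/-- The space `K` obtained by gluing the mapping tori `T_{f_1}, …, T_{f_m}` along `X × {0}`. -/
def GluedMappingTori {X : Type*} [TopologicalSpace X] {m : ℕ} (f : Fin m → X → X) : Type _ :=
  Quot (GluedToriRel f)

instance {X : Type*} [TopologicalSpace X] {m : ℕ} (f : Fin m → X → X) :
    TopologicalSpace (GluedMappingTori f) :=
  inferInstanceAs (TopologicalSpace (Quot _))

/-- The relation on `[0,1] × Fin m` generating the wedge of `m` circles: all the endpoints
`0` and `1` of all the copies of `[0,1]` are identified to a single wedge point. -/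
def WedgeCirclesRel (m : ℕ) : I × Fin m → I × Fin m → Prop := fun a b =>
  (a.1 = 0 ∨ a.1 = 1) ∧ (b.1 = 0 ∨ b.1 = 1)

/-- The wedge `⋁_{j=1}^m S¹_j` of `m` copies of the circle `[0,1]/(0∼1)`. -/
def WedgeCircles (m : ℕ) : Type :=
  Quot (WedgeCirclesRel m)

instance (m : ℕ) : TopologicalSpace (WedgeCircles m) :=
  inferInstanceAs (TopologicalSpace (Quot _))

/-- The map `F : K → ⋁_{j=1}^m S¹_j` obtained by gluing the mapping torus projections
`T_{f_j} → S¹_j`, i.e. `[(x, t, j)] ↦ [(t, j)]`. -/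
def gluedMappingToriProj {X : Type*} [TopologicalSpace X] {m : ℕ} (f : Fin m → X → X) :
    GluedMappingTori f → WedgeCircles m :=
  Quot.map (fun a => (a.2.1, a.2.2))
    (fun _ _ h => h.elim (fun h => ⟨Or.inr h.1, Or.inl h.2.1⟩)
      (fun h => ⟨Or.inl h.1, Or.inl h.2.1⟩))

open Set Topology
universe u v w

/-! ### Interpolation in the unit interval -/

/-- The retraction of the real line onto the unit interval. -/
def clampI (x : ℝ) : I := Set.projIcc 0 1 zero_le_one x

lemma continuous_clampI : Continuous clampI :=
  continuous_projIcc (h := zero_le_one)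

lemma clampI_of_le {x : ℝ} (h : x ≤ 0) : clampI x = 0 := Set.projIcc_of_le_left _ h

lemma clampI_of_ge {x : ℝ} (h : 1 ≤ x) : clampI x = 1 := Set.projIcc_of_right_le _ h

lemma coe_clampI (x : ℝ) : (clampI x : ℝ) = max 0 (min 1 x) := Set.coe_projIcc _ _ _ _

lemma lt_one_of_clampI {x : ℝ} (h : clampI x < 1) : x < 1 := by
  by_contra hx
  exact absurd (clampI_of_ge (not_lt.1 hx)) h.ne

lemma pos_of_clampI {x : ℝ} (h : clampI x ≠ 0) : 0 < x := by
  by_contra hx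
  exact h (clampI_of_le (not_lt.1 hx))

/-- The point `(1 - s) a + s b` of the unit interval. -/
def lerpI (s a b : I) : I :=
  ⟨(1 - s) * a + s * b, by
    have := s.2.1; have := s.2.2; have := a.2.1; have := a.2.2; have := b.2.1; have := b.2.2
    constructor
    · have : (0 : ℝ) ≤ 1 - s := by linarith
      positivity
    · nlinarith⟩

lemma coe_lerpI (s a b : I) : (lerpI s a b : ℝ) = (1 - s) * a + s * b := rfl

@[simp] lemma lerpI_zero (a b : I) : lerpI 0 a b = a := by ext; simp [coe_lerpI]

@[simp] lemma lerpI_one (a b : I) : lerpI 1 a b = b := by ext; simp [coe_lerpI]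

@[simp] lemma lerpI_self (s a : I) : lerpI s a a = a := by ext; simp [coe_lerpI]; ring

lemma le_lerpI {s a b : I} (h : a ≤ b) : a ≤ lerpI s a b := by
  have h' : (a : ℝ) ≤ b := h
  have := s.2.1
  change (a : ℝ) ≤ (1 - s) * a + s * b
  nlinarith

lemma lerpI_le {s a b : I} (h : a ≤ b) : lerpI s a b ≤ b := by
  have h' : (a : ℝ) ≤ b := h
  have := s.2.2
  change (1 - s : ℝ) * a + s * b ≤ b
  nlinarith

@[fun_prop] lemma Continuous.lerpI {Z : Type*} [TopologicalSpace Z] {s a b : Z → I}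
    (hs : Continuous s) (ha : Continuous a) (hb : Continuous b) :
    Continuous fun z => lerpI (s z) (a z) (b z) := by
  unfold _root_.lerpI
  fun_prop

@[fun_prop] lemma Continuous.clampI {Z : Type*} [TopologicalSpace Z] {x : Z → ℝ}
    (hx : Continuous x) : Continuous fun z => clampI (x z) := continuous_clampI.comp hx

/-- A function is continuous if it is so on an open set `S` and coincides with a continuous
function off a closed subset of `S`. -/
lemma continuous_of_support {Z E : Type*} [TopologicalSpace Z] [TopologicalSpace E]
    {F G : Z → E} {S K : Set Z} (hS : IsOpen S) (hK : IsClosed K) (hKS : K ⊆ S)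
    (hF : ContinuousOn F S) (hG : Continuous G) (h : ∀ z, z ∉ K → F z = G z) :
    Continuous F := by
  rw [continuous_iff_continuousAt]
  intro z
  by_cases hz : z ∈ S
  · exact hF.continuousAt (hS.mem_nhds hz)
  · have hz' : z ∈ Kᶜ := fun hk => hz (hKS hk)
    refine (hG.continuousAt (x := z)).congr ?_
    filter_upwards [hK.isOpen_compl.mem_nhds hz'] with y hy
    exact (h y hy).symm

/-! ### Weak covering homotopy property of locally dominated maps -/

/-- Over the set `U`, the map `p : E → B` is dominated, as a space over `U`, by a product
`Y × U`: there are maps `E|U → Y × U → E|U` over `U` whose composite is homotopic to the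
identity through maps over `U`.  All maps are defined globally, with arbitrary values off
`U`; only their continuity over `U` is required. -/
structure FibreDominated {E : Type u} {B : Type v} [TopologicalSpace E] [TopologicalSpace B]
    (p : E → B) (U : Set B) where
  Y : Type u
  [top : TopologicalSpace Y]
  α : E → Y
  β : Y × B → E
  V : E × I → E
  α_cont : ContinuousOn α (p ⁻¹' U)
  β_cont : ContinuousOn β (univ ×ˢ U)
  V_cont : ContinuousOn V ((p ⁻¹' U) ×ˢ univ)
  V_zero : ∀ e, V (e, 0) = e
  V_one : ∀ e, p e ∈ U → V (e, 1) = β (α e, p e)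
  p_V : ∀ e s, p (V (e, s)) = p e
  p_β : ∀ y b, b ∈ U → p (β (y, b)) = b

attribute [instance] FibreDominated.top

/-- A pair `(T, ρ)` of a time function `T : C → I` and a map `ρ : C → E` such that `ρ c`
lies over `h (c, T c)`, and such that `ρ` agrees with `ρ₀` where `ψ` vanishes. -/
def IsPartialLift {E B C : Type*} [TopologicalSpace E] [TopologicalSpace C]
    (p : E → B) (h : C × I → B) (ψ : C → I) (ρ₀ : C → E) (φ : C(C, I × E)) : Prop :=
  ∀ c, p (φ c).2 = h (c, (φ c).1) ∧ (ψ c = 0 → (φ c).2 = ρ₀ c)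

section Step

variable {E : Type u} {B : Type v} {C : Type w} [TopologicalSpace E] [TopologicalSpace B]
  {p : E → B} {h : C × I → B} {ψ : C → I} {ρ₀ : C → E}

/-- The elementary lifting step: over the set `W`, where `h` moves inside `U`, a partial lift
can be moved from the time function `T` to a larger time function `T'`.  The number `ς c` says
how much of the procedure is carried out at `c`: for `ς c ≤ 1` the point only moves inside its
fibre, and it follows `h` as soon as `ς c ≥ 1`. -/
lemma partialLift_step [TopologicalSpace C] {U : Set B} (D : FibreDominated p U)
    (hh : Continuous h) (φ₀ : C(C, I × E)) (hφ₀ : IsPartialLift p h ψ ρ₀ φ₀) (T' : C(C, I))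
    (ς : C → ℝ) (hς : Continuous ς) (W K : Set C) (hW : IsOpen W) (hK : IsClosed K)
    (hKW : K ⊆ W) (hςK : ∀ c, c ∉ K → ς c = 0) (hT : ∀ c, (φ₀ c).1 ≤ T' c)
    (hU : ∀ c ∈ W, ∀ t ∈ Icc (φ₀ c).1 (T' c), h (c, t) ∈ U)
    (hς2 : ∀ c, ς c < 2 → ∀ t ∈ Icc (φ₀ c).1 (T' c), h (c, t) = h (c, (φ₀ c).1))
    (hψ : ∀ c, ψ c = 0 → ς c = 0) :
    ∃ φ₁ : C(C, I × E), φ₀.HomotopicWith φ₁ (IsPartialLift p h ψ ρ₀) ∧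
      ∀ c, (φ₁ c).1 = T' c := by
  have hp : ∀ c ∈ W, p (φ₀ c).2 ∈ U := fun c hc => by
    rw [(hφ₀ c).1]; exact hU c hc _ ⟨le_rfl, hT c⟩
  have hmem : ∀ c (s : I), lerpI s (φ₀ c).1 (T' c) ∈ Icc (φ₀ c).1 (T' c) := fun c s =>
    ⟨le_lerpI (hT c), lerpI_le (hT c)⟩
  have hcW : ∀ c, ς c ≠ 0 → c ∈ W := fun c hc => by
    by_contra hcW
    exact hc (hςK c fun hk => hcW (hKW hk))
  have hVone : ∀ c ∈ W, D.V ((φ₀ c).2, 1) = D.β (D.α (φ₀ c).2, h (c, (φ₀ c).1)) := fun c hc => by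
    rw [D.V_one _ (hp c hc), (hφ₀ c).1]
  have hWo : IsOpen {q : I × C | q.2 ∈ W} := hW.preimage continuous_snd
  have hKc : IsClosed {q : I × C | q.2 ∈ K} := hK.preimage continuous_snd
  -- moving inside the fibres
  let A : I × C → E := fun q => D.V ((φ₀ q.2).2, q.1 * clampI (ς q.2))
  have hA : Continuous A := by
    refine continuous_of_support (G := fun q => (φ₀ q.2).2) hWo hKc (fun q hq => hKW hq) ?_
      (by fun_prop) ?_
    · refine D.V_cont.comp (by fun_prop) fun q hq => ⟨hp _ hq, trivial⟩
    · intro q hq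
      simp only [A, hςK _ hq, clampI_of_le le_rfl, mul_zero, D.V_zero]
  -- following `h`
  let F : I × C → E := fun q => if ς q.2 ≤ 1 then D.V ((φ₀ q.2).2, clampI (ς q.2))
    else D.β (D.α (φ₀ q.2).2, h (q.2, lerpI q.1 (φ₀ q.2).1 (T' q.2)))
  have hF : Continuous F := by
    refine continuous_of_support (G := fun q => (φ₀ q.2).2) hWo hKc (fun q hq => hKW hq) ?_
      (by fun_prop) ?_
    · rw [continuousOn_iff_continuous_domRestrict]
      refine Continuous.if_le (f := fun q : {q : I × C | q.2 ∈ W} => ς q.1.2)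
        (g := fun _ => 1) ?_ ?_ (by fun_prop) continuous_const ?_
      · exact D.V_cont.comp_continuous (f := fun q : {q : I × C | q.2 ∈ W} =>
          ((φ₀ q.1.2).2, clampI (ς q.1.2))) (by fun_prop) fun q => ⟨hp _ q.2, trivial⟩
      · refine D.β_cont.comp_continuous (f := fun q : {q : I × C | q.2 ∈ W} =>
          (D.α (φ₀ q.1.2).2, h (q.1.2, lerpI q.1.1 (φ₀ q.1.2).1 (T' q.1.2)))) ?_
          fun q => ⟨trivial, hU _ q.2 _ (hmem _ _)⟩
        refine Continuous.prodMk ?_ (by fun_prop)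
        exact D.α_cont.comp_continuous (f := fun q : {q : I × C | q.2 ∈ W} => (φ₀ q.1.2).2)
          (by fun_prop) fun q => hp _ q.2
      · rintro ⟨q, hq⟩ h1
        simp only at h1
        simp only [h1, clampI_of_ge le_rfl]
        rw [hVone _ hq, hς2 _ (by rw [h1]; norm_num) _ (hmem _ _)]
    · intro q hq
      simp only [F, hςK _ hq, zero_le_one, if_true, clampI_of_le le_rfl, D.V_zero]
  have hF0 : ∀ c, F (0, c) = A (1, c) := fun c => by
    simp only [F, A, one_mul, lerpI_zero]
    split_ifs with hc
    · rfl
    · rw [← hVone c (hcW c (by linarith)), clampI_of_ge (le_of_not_ge hc)]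
  let φ₂ : C(C, I × E) := ⟨fun c => ((φ₀ c).1, A (1, c)), by fun_prop⟩
  let φ₁ : C(C, I × E) := ⟨fun c => (T' c, F (1, c)), by fun_prop⟩
  refine ⟨φ₁, ContinuousMap.HomotopicWith.trans (g := φ₂)
    ⟨⟨⟨⟨fun q => ((φ₀ q.2).1, A q), by fun_prop⟩, fun c => ?_, fun c => rfl⟩, ?_⟩⟩
    ⟨⟨⟨⟨fun q => (lerpI q.1 (φ₀ q.2).1 (T' q.2), F q), by fun_prop⟩, fun c => ?_, fun c => ?_⟩,
      ?_⟩⟩, fun c => rfl⟩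
  · simp [A, D.V_zero]
  · intro s c
    refine ⟨?_, fun h0 => ?_⟩
    · simp [A, D.p_V, (hφ₀ c).1]
    · simp [A, hψ c h0, clampI_of_le le_rfl, D.V_zero, (hφ₀ c).2 h0]
  · simp [φ₂, hF0]
  · simp [φ₁]
  · intro s c
    refine ⟨?_, fun h0 => ?_⟩
    · change p (F (s, c)) = h (c, lerpI s (φ₀ c).1 (T' c))
      simp only [F]
      split_ifs with hc
      · rw [D.p_V, hς2 c (by linarith) _ (hmem c s), (hφ₀ c).1]
      · exact D.p_β _ _ (hU c (hcW c (by linarith)) _ (hmem c s))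
    · change F (s, c) = ρ₀ c
      simp [F, hψ c h0, clampI_of_le le_rfl, D.V_zero, (hφ₀ c).2 h0]

/-- Partial lifts can be moved from time `t₁` to time `t₂` if `h` maps each product of a
`δ`-ball with `[t₁, t₂]` into a set of the cover. -/
lemma partialLift_window [PseudoMetricSpace C] [CompactSpace C] {κ : Type*} {U : κ → Set B}
    (D : ∀ k, FibreDominated p (U k)) (hh : Continuous h) (hψc : Continuous ψ)
    (hψ : ∀ c, ψ c < 1 → ∀ t, h (c, t) = h (c, 0)) {t₁ t₂ : I} (ht : t₁ ≤ t₂) {δ : ℝ}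
    (hδ : 0 < δ) (hU : ∀ a, ∃ k, ∀ c ∈ Metric.ball a δ, ∀ t ∈ Icc t₁ t₂, h (c, t) ∈ U k)
    (φ₀ : C(C, I × E)) (hφ₀ : IsPartialLift p h ψ ρ₀ φ₀) (hT : ∀ c, (φ₀ c).1 = t₁) :
    ∃ φ₁ : C(C, I × E), φ₀.HomotopicWith φ₁ (IsPartialLift p h ψ ρ₀) ∧
      ∀ c, (φ₁ c).1 = t₂ := by
  classical
  -- The time is raised to `t₂` on one small ball after the other.
  have key : ∀ s : Finset C, ∃ φ : C(C, I × E),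
      φ₀.HomotopicWith φ (IsPartialLift p h ψ ρ₀) ∧ (∀ c, (φ c).1 ∈ Icc t₁ t₂) ∧
      ∀ a ∈ s, ∀ c, dist c a ≤ δ / 4 → (φ c).1 = t₂ := by
    intro s
    induction s using Finset.induction_on with
    | empty =>
      exact ⟨φ₀, .refl _ hφ₀, fun c => by simp [hT, ht], by simp⟩
    | insert a s _ ih =>
      obtain ⟨φ, hφ, hφT, hφs⟩ := ih
      obtain ⟨k, hk⟩ := hU a
      have hφP : IsPartialLift p h ψ ρ₀ φ := by
        obtain ⟨H⟩ := hφ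
        have := H.prop 1
        simpa using this
      let θ : C → I := fun c => clampI (2 - 4 * dist c a / δ)
      have hle : ∀ c, max (φ c).1 (lerpI (θ c) t₁ t₂) ≤ t₂ := fun c =>
        max_le (hφT c).2 (lerpI_le ht)
      obtain ⟨φ₁, h1, h2⟩ := partialLift_step (D k) hh φ hφP
        ⟨fun c => max (φ c).1 (lerpI (θ c) t₁ t₂), by fun_prop⟩
        (fun c => 2 * (clampI (3 - 4 * dist c a / δ) * ψ c : I)) (by fun_prop)
        (Metric.ball a δ) (Metric.closedBall a (3 * δ / 4)) Metric.isOpen_ball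
        Metric.isClosed_closedBall (Metric.closedBall_subset_ball (by linarith))
        (by
          intro c hc
          rw [Metric.mem_closedBall, not_le] at hc
          rw [clampI_of_le, zero_mul]
          · simp
          · rw [sub_nonpos, le_div_iff₀ hδ]; linarith)
        (fun c => le_max_left _ _)
        (fun c hc t ht' => hk c hc t ⟨(hφT c).1.trans ht'.1, ht'.2.trans (hle c)⟩)
        (by
          intro c hc t ht'
          rcases lt_or_eq_of_le (ψ c).2.2 with h1 | h1
          · rw [hψ c h1 t, hψ c h1 (φ c).1]
          · have h1' : ψ c = 1 := Subtype.ext h1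
            have h3 : clampI (3 - 4 * dist c a / δ) < 1 := by
              rw [h1', mul_one] at hc
              change (clampI (3 - 4 * dist c a / δ) : ℝ) < 1
              linarith
            have h4 := lt_one_of_clampI h3
            have h5 : θ c = 0 := clampI_of_le (by linarith)
            have h6 : t = (φ c).1 := by
              refine le_antisymm (ht'.2.trans ?_) ht'.1
              simp [h5, (hφT c).1]
            rw [h6])
        (fun c hc => by simp [hc])
      refine ⟨φ₁, hφ.trans h1, fun c => ?_, ?_⟩
      · rw [h2]
        exact ⟨(hφT c).1.trans (le_max_left _ _), hle c⟩
      · intro b hb c hc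
        rw [h2]
        refine le_antisymm (hle c) ?_
        rcases Finset.mem_insert.1 hb with rfl | hb
        · have : θ c = 1 := clampI_of_ge (by
            have : 4 * dist c b / δ ≤ 1 := by rw [div_le_iff₀ hδ]; linarith
            linarith)
          simp [this]
        · exact (hφs b hb c hc).ge.trans (le_max_left _ _)
  obtain ⟨s, -, hs, hcov⟩ := Metric.finite_approx_of_totallyBounded
    (isCompact_univ (X := C)).totallyBounded (δ / 4) (by positivity)
  obtain ⟨φ, h1, -, h3⟩ := key hs.toFinset
  refine ⟨φ, h1, fun c => ?_⟩
  obtain ⟨a, ha, hac⟩ := mem_iUnion₂.1 (hcov (mem_univ c))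
  exact h3 a (by simpa using ha) c (le_of_lt hac)

/-- A weak covering homotopy property for compact metric parameter spaces: if `p` is locally
dominated by products, then a homotopy `h` with a lift `ρ` of its start can be lifted after a
reparametrization `R` of the time.  The lift is constant where `ψ` vanishes, provided that `h`
is stationary wherever `ψ < 1`. -/
theorem weak_covering_homotopy [PseudoMetricSpace C] [CompactSpace C] {κ : Type*} {U : κ → Set B}
    (hUo : ∀ k, IsOpen (U k)) (hUc : ∀ b, ∃ k, b ∈ U k)
    (D : ∀ k, FibreDominated p (U k)) (hh : Continuous h) (hψc : Continuous ψ)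
    (hψ : ∀ c, ψ c < 1 → ∀ t, h (c, t) = h (c, 0)) (hρc : Continuous ρ₀)
    (hρ : ∀ c, p (ρ₀ c) = h (c, 0)) :
    ∃ (L : I × C → E) (R : I × C → I), Continuous L ∧ Continuous R ∧
      (∀ c, R (0, c) = 0) ∧ (∀ c, R (1, c) = 1) ∧ (∀ c, L (0, c) = ρ₀ c) ∧
      (∀ s c, p (L (s, c)) = h (c, R (s, c))) ∧ (∀ s c, ψ c = 0 → L (s, c) = ρ₀ c) := by
  obtain ⟨δ, hδ, hL⟩ := lebesgue_number_lemma_of_metric (isCompact_univ (X := C × I))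
    (c := fun k => h ⁻¹' (U k)) (fun k => (hUo k).preimage hh)
    (fun q _ => mem_iUnion.2 (hUc (h q)))
  obtain ⟨N, hN⟩ := exists_nat_one_div_lt hδ
  let φ₀ : C(C, I × E) := ⟨fun c => (0, ρ₀ c), by fun_prop⟩
  have hφ₀ : IsPartialLift p h ψ ρ₀ φ₀ := fun c => ⟨hρ c, fun _ => rfl⟩
  have hN0 : (0 : ℝ) < N + 1 := by positivity
  have key : ∀ l : ℕ, ∃ φ : C(C, I × E), φ₀.HomotopicWith φ (IsPartialLift p h ψ ρ₀) ∧
      ∀ c, (φ c).1 = clampI (l / (N + 1)) := by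
    intro l
    induction l with
    | zero => exact ⟨φ₀, .refl _ hφ₀, fun c => by simp [φ₀, clampI_of_le le_rfl]⟩
    | succ l ih =>
      obtain ⟨φ, hφ, hφT⟩ := ih
      have hφP : IsPartialLift p h ψ ρ₀ φ := by
        obtain ⟨H⟩ := hφ
        have := H.prop 1
        simpa using this
      have hwin : ∀ a, ∃ k, ∀ c ∈ Metric.ball a δ,
          ∀ t ∈ Icc (clampI (l / (N + 1))) (clampI ((l + 1 : ℕ) / (N + 1))), h (c, t) ∈ U k := by
        intro a
        obtain ⟨k, hk⟩ := hL (a, clampI (l / (N + 1))) trivial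
        refine ⟨k, fun c hc t ht => hk ?_⟩
        rw [Metric.mem_ball, Prod.dist_eq]
        refine max_lt hc ?_
        rw [Subtype.dist_eq, Real.dist_eq]
        have h3 : (clampI (l / (N + 1)) : ℝ) ≤ t := ht.1
        have h4 : (t : ℝ) ≤ clampI ((l + 1 : ℕ) / (N + 1)) := ht.2
        have h5 : (clampI ((l + 1 : ℕ) / (N + 1)) : ℝ) ≤ clampI (l / (N + 1)) + 1 / (N + 1) := by
          rw [coe_clampI, coe_clampI]
          have h6 : (0 : ℝ) ≤ 1 / (N + 1) := by positivity
          have h7 : ((l + 1 : ℕ) / (N + 1) : ℝ) = l / (N + 1) + 1 / (N + 1) := by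
            push_cast; ring
          rw [h7]
          refine max_le (by positivity) ?_
          rcases le_total (1 : ℝ) (l / (N + 1)) with h8 | h8
          · rw [min_eq_left h8, max_eq_right zero_le_one]
            exact (min_le_left _ _).trans (by linarith)
          · rw [min_eq_right h8]
            exact (min_le_right _ _).trans (by gcongr; exact le_max_right _ _)
        rw [abs_of_nonneg (by linarith)]
        linarith
      obtain ⟨φ₁, h1, h2⟩ := partialLift_window D hh hψc hψ
        (monotone_projIcc _ (by push_cast; gcongr; linarith)) hδ hwin φ hφP hφT
      exact ⟨φ₁, hφ.trans h1, h2⟩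
  obtain ⟨φ, ⟨H⟩, hφT⟩ := key (N + 1)
  have hφT' : ∀ c, (φ c).1 = 1 := fun c => by
    rw [hφT, clampI_of_ge]
    push_cast
    rw [div_self hN0.ne']
  refine ⟨fun q => (H q).2, fun q => (H q).1, by fun_prop, by fun_prop, fun c => ?_, fun c => ?_,
    fun c => ?_, fun s c => (H.prop s c).1, fun s c => (H.prop s c).2⟩
  · simp [φ₀]
  · simp [hφT']
  · simp [φ₀]

end Step

/-! ### Mapping path spaces of homotopy equivalences -/

/-- The mapping path space of `f`: pairs of a point `x` and a path starting at `f x`. -/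
abbrev PathSp {X : Type u} [TopologicalSpace X] (f : C(X, X)) : Type u :=
  {n : X × C(I, X) // n.2 0 = f n.1}

namespace PathSp

variable {X : Type u} [TopologicalSpace X] {f : C(X, X)}

/-- The base point of an element of the mapping path space. -/
def src (f : C(X, X)) : C(PathSp f, X) := ⟨fun n => n.1.1, by fun_prop⟩

/-- The end point of the path of an element of the mapping path space. -/
def tgt (f : C(X, X)) : C(PathSp f, X) := ⟨fun n => n.1.2 1, by fun_prop⟩

/-- The map into the mapping path space given by a family of points and a family of paths. -/
def mkMap {Z : Type*} [TopologicalSpace Z] (x : C(Z, X)) (ω : C(Z × I, X))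
    (h : ∀ z, ω (z, 0) = f (x z)) : C(Z, PathSp f) :=
  ⟨fun z => ⟨(x z, ω.curry z), h z⟩, by fun_prop⟩

@[simp] lemma mkMap_src {Z : Type*} [TopologicalSpace Z] (x : C(Z, X)) (ω : C(Z × I, X))
    (h : ∀ z, ω (z, 0) = f (x z)) (z : Z) : (mkMap x ω h z).1.1 = x z := rfl

@[simp] lemma mkMap_path {Z : Type*} [TopologicalSpace Z] (x : C(Z, X)) (ω : C(Z × I, X))
    (h : ∀ z, ω (z, 0) = f (x z)) (z : Z) (t : I) : (mkMap x ω h z).1.2 t = ω (z, t) := rfl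

lemma ext' {n n' : PathSp f} (h₁ : n.1.1 = n'.1.1) (h₂ : ∀ t, n.1.2 t = n'.1.2 t) : n = n' :=
  Subtype.ext (Prod.ext h₁ (ContinuousMap.ext h₂))

/-- The inclusion of `X` by constant paths. -/
def const (f : C(X, X)) : C(X, PathSp f) :=
  mkMap (.id X) ⟨fun q => f q.1, by fun_prop⟩ fun _ => rfl

/-- Shrinking the paths to their start, a deformation of the mapping path space to `X`. -/
def shrink (f : C(X, X)) : C(PathSp f × I, PathSp f) :=
  mkMap ⟨fun q => q.1.1.1, by fun_prop⟩
    ⟨fun q => q.1.1.1.2 (q.2 * σ q.1.2), by fun_prop⟩ fun z => by simpa using z.1.2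

lemma shrink_zero (n : PathSp f) : shrink f (n, 0) = n :=
  ext' rfl fun t => by simp [shrink]

lemma shrink_one (n : PathSp f) : shrink f (n, 1) = const f (src f n) :=
  ext' rfl fun t => by
    change _ = f n.1.1
    simpa [shrink] using n.2

lemma src_shrink (n : PathSp f) (s : I) : src f (shrink f (n, s)) = src f n := rfl

lemma src_const (x : X) : src f (const f x) = x := rfl

lemma tgt_const (x : X) : tgt f (const f x) = f x := rfl

lemma id_homotopic : (ContinuousMap.id (PathSp f)).Homotopic ((const f).comp (src f)) :=
  ⟨⟨(shrink f).comp ⟨Prod.swap, continuous_swap⟩, fun n => shrink_zero n, fun n => shrink_one n⟩⟩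

/-- A shrinking of the end point map of a mapping path space: a section `τ`, and a homotopy `V`
through maps over `X` from the identity to `τ ∘ tgt f`. -/
structure Shrinking (f : C(X, X)) where
  τ : C(X, PathSp f)
  V : C(PathSp f × I, PathSp f)
  tgt_τ : ∀ x, tgt f (τ x) = x
  V_zero : ∀ n, V (n, 0) = n
  V_one : ∀ n, V (n, 1) = τ (tgt f n)
  tgt_V : ∀ n s, tgt f (V (n, s)) = tgt f n

/-- For a homotopy equivalence `f`, the end point map `tgt f` of the mapping path space, which
is a fibration and a homotopy equivalence, is shrinkable: it has a section `τ`, and the identity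
is homotopic to `τ ∘ tgt f` through maps over `X`.

A homotopy `K` from `τ ∘ tgt f` to the identity need not be one of maps over `X`.  The homotopy
`V` starts as the concatenation `J` of the reverse of `K` with the image of `K` under `τ ∘ tgt f`;
its end points move along a path and back, and each path is then extended by the remaining
part of the way back. -/
lemma nonempty_shrinking (f : C(X, X))
    (hf : ∃ g : C(X, X), (g.comp f).Homotopic (ContinuousMap.id X) ∧
      (f.comp g).Homotopic (ContinuousMap.id X)) : Nonempty (Shrinking f) := by
  obtain ⟨g, hgf, ⟨F⟩⟩ := hf
  let τ : C(X, PathSp f) := mkMap g ⟨fun q => F (q.2, q.1), by fun_prop⟩ fun y => by simp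
  have hτ : ∀ x, tgt f (τ x) = x := fun x => by simp [tgt, τ]
  have h1 : (ContinuousMap.id (PathSp f)).Homotopic ((const f).comp (src f)) := id_homotopic
  have h2 : (tgt f).Homotopic (f.comp (src f)) := (ContinuousMap.Homotopic.refl (tgt f)).comp h1
  have h3 : τ.Homotopic ((const f).comp g) := h1.comp (.refl τ)
  have h4 : (τ.comp (tgt f)).Homotopic (.id _) := by
    refine (h3.comp h2).trans (.trans ?_ h1.symm)
    exact (ContinuousMap.Homotopic.refl (const f)).comp (hgf.comp (.refl (src f)))
  obtain ⟨K⟩ := h4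
  let m : I → ℝ := fun s => |1 - 2 * (s : ℝ)|
  have hm : Continuous m := by fun_prop
  have hm0 : ∀ s, 0 ≤ m s := fun s => abs_nonneg _
  have hm1 : ∀ s, m s ≤ 1 := fun s => abs_le.2 ⟨by linarith [s.2.2], by linarith [s.2.1]⟩
  let J : PathSp f × I → PathSp f := fun q =>
    if (q.2 : ℝ) ≤ 1 / 2 then K (clampI (1 - 2 * q.2), q.1)
    else τ (tgt f (K (clampI (2 * q.2 - 1), q.1)))
  have hJ : Continuous J := by
    refine Continuous.if_le (by fun_prop) (by fun_prop) (by fun_prop) (by fun_prop) ?_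
    intro q hq
    rw [hq, clampI_of_le (by norm_num), clampI_of_le (by norm_num)]
    simp [hτ]
  have hbJ : ∀ q, tgt f (J q) = tgt f (K (clampI (m q.2), q.1)) := fun q => by
    simp only [J, m]
    split_ifs with h
    · rw [abs_of_nonneg (by linarith)]
    · rw [hτ, abs_of_neg (by linarith), neg_sub]
  let Ω : (PathSp f × I) × I → X := fun q =>
    if (q.2 : ℝ) * (2 - m q.1.2) ≤ 1 then (J q.1).1.2 (clampI (q.2 * (2 - m q.1.2)))
    else tgt f (K (clampI (m q.1.2 + q.2 * (2 - m q.1.2) - 1), q.1.1))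
  have hΩ : Continuous Ω := by
    refine Continuous.if_le (by fun_prop) (by fun_prop) (by fun_prop) (by fun_prop) ?_
    intro q hq
    rw [hq, clampI_of_ge le_rfl, add_sub_cancel_right]
    exact hbJ q.1
  have hΩ1 : ∀ q, Ω (q, 1) = tgt f q.1 := fun q => by
    simp only [Ω, Icc.coe_one, one_mul]
    split_ifs with h
    · have h' : m q.2 = 1 := le_antisymm (hm1 _) (by linarith)
      rw [h', clampI_of_ge (by norm_num)]
      refine (hbJ q).trans ?_
      rw [h', clampI_of_ge le_rfl]
      simp
    · rw [clampI_of_ge (by linarith)]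
      simp
  have hVJ : ∀ q t, m q.2 = 1 → Ω (q, t) = (J q).1.2 t := fun q t h => by
    have h' : (t : ℝ) * (2 - m q.2) = t := by rw [h]; ring
    simp only [Ω, h', if_pos t.2.2]
    exact congrArg _ (projIcc_val zero_le_one t)
  refine ⟨τ, mkMap ⟨fun q => (J q).1.1, by fun_prop⟩ ⟨Ω, hΩ⟩ fun q => ?_, hτ, fun n => ?_,
    fun n => ?_, fun n s => hΩ1 (n, s)⟩
  · have := (J q).2
    simpa [Ω, clampI_of_le le_rfl] using this
  · have h : J (n, 0) = n := by simp [J, clampI_of_ge le_rfl]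
    refine ext' (congrArg (fun n => n.1.1) h) fun t => ?_
    refine (hVJ _ t (by simp [m])).trans (by rw [h])
  · have h : J (n, 1) = τ (tgt f n) := by
      have h' : ¬ (1 : ℝ) ≤ 1 / 2 := by norm_num
      simp only [J, Icc.coe_one, if_neg h']
      rw [clampI_of_ge (by norm_num)]
      simp
    refine ext' (congrArg (fun n => n.1.1) h) fun t => ?_
    refine (hVJ _ t (by norm_num [m])).trans (by rw [h])

end PathSp

/-! ### The wedge of circles -/

namespace WedgeCircles

variable {m : ℕ}

/-- The quotient map from the disjoint union of intervals to the wedge of circles. -/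
def mk (z : I × Fin m) : WedgeCircles m := Quot.mk _ z

lemma isQuotientMap_mk : IsQuotientMap (mk (m := m)) := isQuotientMap_quot_mk

lemma continuous_mk : Continuous (mk (m := m)) := continuous_quot_mk

lemma mk_eq {z z' : I × Fin m} (h : z.1 = 0 ∨ z.1 = 1) (h' : z'.1 = 0 ∨ z'.1 = 1) :
    mk z = mk z' := Quot.sound ⟨h, h'⟩

lemma mk_eq_iff {z z' : I × Fin m} :
    mk z = mk z' ↔ z = z' ∨ ((z.1 = 0 ∨ z.1 = 1) ∧ (z'.1 = 0 ∨ z'.1 = 1)) := by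
  classical
  constructor
  · intro h
    let φ : WedgeCircles m → Option (I × Fin m) :=
      Quot.lift (fun z => if z.1 = 0 ∨ z.1 = 1 then none else some z) fun z z' h => by
        simp only [if_pos h.1, if_pos h.2]
    have h1 : φ (mk z) = φ (mk z') := congrArg φ h
    simp only [φ, mk] at h1
    split_ifs at h1 with h2 h3
    · exact Or.inr ⟨h2, h3⟩
    · exact Or.inl (Option.some.inj h1)
  · rintro (rfl | h)
    · rfl
    · exact mk_eq h.1 h.2

lemma isClosed_ends : IsClosed {z : I × Fin m | z.1 = 0 ∨ z.1 = 1} :=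
  (isClosed_eq continuous_fst continuous_const).union (isClosed_eq continuous_fst continuous_const)

lemma isClosedMap_mk : IsClosedMap (mk (m := m)) := by
  intro A hA
  rw [← isQuotientMap_mk.isClosed_preimage]
  by_cases h : ∃ z ∈ A, z.1 = 0 ∨ z.1 = 1
  · obtain ⟨z, hz, hz'⟩ := h
    convert hA.union isClosed_ends using 1
    ext w
    simp only [mem_preimage, mem_image, mk_eq_iff, mem_union, mem_ofPred_eq]
    constructor
    · rintro ⟨v, hv, rfl | hvw⟩
      · exact Or.inl hv
      · exact Or.inr hvw.2
    · rintro (hw | hw)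
      · exact ⟨w, hw, Or.inl rfl⟩
      · exact ⟨z, hz, Or.inr ⟨hz', hw⟩⟩
  · convert hA using 1
    ext w
    simp only [mem_preimage, mem_image, mk_eq_iff]
    constructor
    · rintro ⟨v, hv, rfl | hvw⟩
      · exact hv
      · exact absurd ⟨v, hv, hvw.1⟩ h
    · exact fun hw => ⟨w, hw, Or.inl rfl⟩

lemma isProperMap_mk : IsProperMap (mk (m := m)) := by
  refine isProperMap_iff_isClosedMap_and_compact_fibers.2 ⟨continuous_mk, isClosedMap_mk, ?_⟩
  intro y
  obtain ⟨z, rfl⟩ := isQuotientMap_mk.surjective y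
  refine IsClosed.isCompact ?_
  rw [isQuotientMap_mk.isClosed_preimage, ← image_singleton]
  exact isClosedMap_mk _ isClosed_singleton

/-- As `mk` is proper, its product with the identity of any space is a quotient map. -/
lemma isQuotientMap_prod (Y : Type*) [TopologicalSpace Y] :
    IsQuotientMap (Prod.map id mk : Y × (I × Fin m) → Y × WedgeCircles m) :=
  (isProperMap_id.prodMap isProperMap_mk).isClosedMap.isQuotientMap
    (continuous_id.prodMap continuous_mk) (Function.surjective_id.prodMap isQuotientMap_mk.surjective)

/-- The open arc of the `j`-th circle for `some j`, the complement of the midpoints of all the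
circles for `none`. -/
def cover : Option (Fin m) → Set (WedgeCircles m)
  | none => {b | Quot.lift (fun z : I × Fin m => (z.1 : ℝ) ≠ 1 / 2) (by
      rintro ⟨t, j⟩ ⟨t', j'⟩ ⟨h | h, h' | h'⟩ <;> simp only at h h' <;> subst h <;> subst h' <;>
        norm_num) b}
  | some j => {b | Quot.lift (fun z : I × Fin m => ¬(z.1 = 0 ∨ z.1 = 1) ∧ z.2 = j) (by
      rintro z z' ⟨h, h'⟩
      simp [h, h']) b}

lemma mk_mem_cover_none {z : I × Fin m} : mk z ∈ cover none ↔ (z.1 : ℝ) ≠ 1 / 2 := Iff.rfl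

lemma mk_mem_cover_some {z : I × Fin m} {j : Fin m} :
    mk z ∈ cover (some j) ↔ ¬(z.1 = 0 ∨ z.1 = 1) ∧ z.2 = j := Iff.rfl

lemma isOpen_cover (k : Option (Fin m)) : IsOpen (cover k) := by
  rw [← isQuotientMap_mk.isOpen_preimage]
  cases k with
  | none => exact isOpen_ne_fun (by fun_prop) continuous_const
  | some j =>
    exact isClosed_ends.isOpen_compl.inter ((isOpen_discrete {j}).preimage continuous_snd)

lemma exists_mem_cover (b : WedgeCircles m) : ∃ k, b ∈ cover k := by
  obtain ⟨⟨t, j⟩, rfl⟩ := isQuotientMap_mk.surjective b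
  by_cases h : (t : ℝ) = 1 / 2
  · refine ⟨some j, mk_mem_cover_some.2 ⟨?_, rfl⟩⟩
    rintro (rfl | rfl) <;> norm_num at h
  · exact ⟨none, mk_mem_cover_none.2 h⟩

open Classical in
/-- The coordinate of a point in the circle on which it lies. -/
def coord : WedgeCircles m → I :=
  Quot.lift (fun z => if z.1 = 0 ∨ z.1 = 1 then 0 else z.1) fun _ _ h => by
    simp only [if_pos h.1, if_pos h.2]

lemma coord_mk {z : I × Fin m} (h : ¬(z.1 = 0 ∨ z.1 = 1)) : coord (mk z) = z.1 := if_neg h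

lemma continuousOn_coord (j : Fin m) : ContinuousOn coord (cover (some j)) := by
  rw [isQuotientMap_mk.continuousOn_isOpen_iff (isOpen_cover _)]
  exact continuous_fst.continuousOn.congr fun z hz => coord_mk (mk_mem_cover_some.1 hz).1

end WedgeCircles

/-! ### The auxiliary space over the wedge of circles -/

lemma continuousOn_sigma_prod {ι : Type*} {A : ι → Type*} {Z W : Type*}
    [∀ i, TopologicalSpace (A i)] [TopologicalSpace Z] [TopologicalSpace W]
    {g : (Σ i, A i) × Z → W} {S : Set ((Σ i, A i) × Z)} (hS : IsOpen S)
    (h : ∀ i, ContinuousOn (fun q : A i × Z => g (⟨i, q.1⟩, q.2))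
      {q | ((⟨i, q.1⟩, q.2) : (Σ i, A i) × Z) ∈ S}) : ContinuousOn g S := by
  rintro ⟨⟨i, a⟩, z⟩ hz
  refine ContinuousAt.continuousWithinAt ?_
  have he : IsOpenEmbedding (Prod.map (Sigma.mk i) id : A i × Z → (Σ i, A i) × Z) :=
    IsOpenEmbedding.sigmaMk.prodMap .id
  refine (he.continuousAt_iff (x := (a, z))).1 ?_
  exact (h i).continuousAt ((hS.preimage he.continuous).mem_nhds hz)

lemma continuousOn_sigma {ι : Type*} {A : ι → Type*} {W : Type*}
    [∀ i, TopologicalSpace (A i)] [TopologicalSpace W]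
    {g : (Σ i, A i) → W} {S : Set (Σ i, A i)} (hS : IsOpen S)
    (h : ∀ i, ContinuousOn (fun a : A i => g ⟨i, a⟩) {a | (⟨i, a⟩ : Σ i, A i) ∈ S}) :
    ContinuousOn g S := by
  rintro ⟨i, a⟩ hz
  refine ContinuousAt.continuousWithinAt ?_
  refine (IsOpenEmbedding.sigmaMk.continuousAt_iff (f := Sigma.mk i) (x := a)).1 ?_
  exact (h i).continuousAt ((hS.preimage continuous_sigmaMk).mem_nhds hz)

/-- A function defined by distinction of the cases `t < 1 / 2` and `1 / 2 ≤ t` is continuous away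
from `t = 1 / 2`. -/
lemma continuousOn_ite_half {Z W : Type*} [TopologicalSpace Z] [TopologicalSpace W]
    {t : Z → ℝ} (ht : Continuous t) {g₁ g₂ : Z → W} (h₁ : Continuous g₁) (h₂ : Continuous g₂) :
    ContinuousOn (fun z => if t z < 1 / 2 then g₁ z else g₂ z) {z | t z ≠ 1 / 2} := by
  intro z hz
  refine ContinuousAt.continuousWithinAt ?_
  rcases lt_or_gt_of_ne (show t z ≠ 1 / 2 from hz) with h | h
  · refine h₁.continuousAt.congr ?_
    filter_upwards [ht.continuousAt.eventually_lt_const h] with w hw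
    rw [if_pos hw]
  · refine h₂.continuousAt.congr ?_
    filter_upwards [ht.continuousAt.eventually_const_lt h] with w hw
    rw [if_neg hw.le.not_gt]

section Aux

variable {X : Type u} [TopologicalSpace X] {m : ℕ}

/-- The disjoint union of the products of the mapping path spaces with the interval. -/
abbrev Seg (f : Fin m → C(X, X)) : Type u := Σ j, PathSp (f j) × I

/-- `x` is the value in `X` of the point `q`, which lies over an end of the interval: at `0` this
is the base point, at `1` it is the end point of the path. -/
def IsEnd (f : Fin m → C(X, X)) (q : Seg f) (x : X) : Prop :=
  (q.2.2 = 0 ∧ PathSp.src _ q.2.1 = x) ∨ (q.2.2 = 1 ∧ PathSp.tgt _ q.2.1 = x)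

/-- The relation identifying points over the ends of the intervals with equal value in `X`. -/
def AuxRel (f : Fin m → C(X, X)) (q q' : Seg f) : Prop := ∃ x, IsEnd f q x ∧ IsEnd f q' x

/-- A space over the wedge of circles which is fibre homotopically trivial over the open sets
`WedgeCircles.cover k`: the double mapping cylinders of the maps `src (f j)` and `tgt (f j)`,
glued together along their ends, which are all equal to `X`. -/
def AuxSp (f : Fin m → C(X, X)) : Type u := Quot (AuxRel f)

instance (f : Fin m → C(X, X)) : TopologicalSpace (AuxSp f) :=
  inferInstanceAs (TopologicalSpace (Quot _))

namespace AuxSp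

variable {f : Fin m → C(X, X)}

/-- The quotient map onto the auxiliary space. -/
def mk (q : Seg f) : AuxSp f := Quot.mk _ q

lemma isQuotientMap_mk : IsQuotientMap (mk (f := f)) := isQuotientMap_quot_mk

lemma continuous_mk : Continuous (mk (f := f)) := continuous_quot_mk

lemma mk_eq {q q' : Seg f} {x : X} (h : IsEnd f q x) (h' : IsEnd f q' x) : mk q = mk q' :=
  Quot.sound ⟨x, h, h'⟩

lemma isQuotientMap_prod : IsQuotientMap (Prod.map mk id : Seg f × I → AuxSp f × I) := by
  refine isQuotientMap_iff_isClosed.2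
    ⟨isQuotientMap_mk.surjective.prodMap Function.surjective_id, fun s => ?_⟩
  constructor
  · exact fun hs => hs.preimage (continuous_mk.prodMap continuous_id)
  · intro hs
    have h : Continuous fun q : AuxSp f × I => q ∉ s :=
      isQuotientMap_mk.continuous_lift_prod_left (continuous_Prop.2 hs.isOpen_compl)
    exact isOpen_compl_iff.1 (continuous_Prop.1 h)

lemma isEnd_zero {j : Fin m} {n : PathSp (f j)} : IsEnd f ⟨j, n, 0⟩ (PathSp.src _ n) :=
  Or.inl ⟨rfl, rfl⟩

lemma isEnd_one {j : Fin m} {n : PathSp (f j)} : IsEnd f ⟨j, n, 1⟩ (PathSp.tgt _ n) :=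
  Or.inr ⟨rfl, rfl⟩

/-- The projection of the auxiliary space to the wedge of circles. -/
def proj : AuxSp f → WedgeCircles m :=
  Quot.lift (fun q => WedgeCircles.mk (q.2.2, q.1)) fun _ _ ⟨_, h, h'⟩ =>
    WedgeCircles.mk_eq (h.imp And.left And.left) (h'.imp And.left And.left)

lemma proj_mk (q : Seg f) : proj (mk q) = WedgeCircles.mk (q.2.2, q.1) := rfl

lemma continuous_proj : Continuous (proj (f := f)) := by
  refine isQuotientMap_mk.continuous_iff.2 (WedgeCircles.continuous_mk.comp ?_)
  exact continuous_sigma_iff.2 fun j => continuous_snd.prodMk continuous_const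

/-- Away from the midpoints, the auxiliary space retracts to the copy of `X` over the wedge point:
to the base point for `t < 1 / 2` and to the end point for `1 / 2 ≤ t`. -/
def toX : AuxSp f → X :=
  Quot.lift (fun q => if (q.2.2 : ℝ) < 1 / 2 then PathSp.src _ q.2.1 else PathSp.tgt _ q.2.1) (by
    have key : ∀ (q : Seg f) x, IsEnd f q x →
        (if (q.2.2 : ℝ) < 1 / 2 then PathSp.src _ q.2.1 else PathSp.tgt _ q.2.1) = x := by
      rintro ⟨j, n, t⟩ x (⟨rfl, h⟩ | ⟨rfl, h⟩)
      · simpa using h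
      · norm_num
        simpa using h
    rintro q q' ⟨x, h, h'⟩
    exact (key q x h).trans (key q' x h').symm)

variable (S : ∀ j, PathSp.Shrinking (f j))

/-- The fibrewise inclusion of `X`, through constant paths for `t < 1 / 2` and through the section
of the end point map for `1 / 2 ≤ t`. -/
def ofX (x : X) : WedgeCircles m → AuxSp f :=
  Quot.lift (fun z => mk ⟨z.2, if (z.1 : ℝ) < 1 / 2 then PathSp.const _ x else (S z.2).τ x, z.1⟩)
    (by
      have key : ∀ z : I × Fin m, z.1 = 0 ∨ z.1 = 1 → IsEnd f
          ⟨z.2, if (z.1 : ℝ) < 1 / 2 then PathSp.const _ x else (S z.2).τ x, z.1⟩ x := by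
        rintro ⟨t, j⟩ (h | h) <;> simp only at h <;> subst h
        · exact Or.inl ⟨rfl, by simp [PathSp.src_const]⟩
        · exact Or.inr ⟨rfl, by norm_num [(S j).tgt_τ]⟩
      rintro z z' ⟨h, h'⟩
      exact mk_eq (key z h) (key z' h'))

/-- The fibrewise deformation from the identity to the retraction to `X`. -/
def deform (s : I) : AuxSp f → AuxSp f :=
  Quot.lift (fun q => mk ⟨q.1, if (q.2.2 : ℝ) < 1 / 2 then PathSp.shrink _ (q.2.1, s) else
    (S q.1).V (q.2.1, s), q.2.2⟩) (by
      have key : ∀ (q : Seg f) x, IsEnd f q x →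
          IsEnd f ⟨q.1, if (q.2.2 : ℝ) < 1 / 2 then PathSp.shrink _ (q.2.1, s) else
            (S q.1).V (q.2.1, s), q.2.2⟩ x := by
        rintro ⟨j, n, t⟩ x (⟨h1, h⟩ | ⟨h1, h⟩) <;> simp only at h1 <;> subst h1
        · exact Or.inl ⟨rfl, by simpa [PathSp.src_shrink] using h⟩
        · refine Or.inr ⟨rfl, ?_⟩
          norm_num
          rw [(S j).tgt_V]
          exact h
      rintro q q' ⟨x, h, h'⟩
      exact mk_eq (key q x h) (key q' x h'))

/-- Away from the midpoints of the circles, the auxiliary space is dominated by the product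
with `X`. -/
def dominatedNone : FibreDominated (proj (f := f)) (WedgeCircles.cover none) where
  Y := X
  α := toX
  β q := ofX S q.1 q.2
  V q := deform S q.2 q.1
  α_cont := by
    rw [isQuotientMap_mk.continuousOn_isOpen_iff
      ((WedgeCircles.isOpen_cover _).preimage continuous_proj)]
    refine continuousOn_sigma (((WedgeCircles.isOpen_cover _).preimage continuous_proj).preimage
      continuous_mk) fun j => ?_
    exact continuousOn_ite_half (t := fun q : PathSp (f j) × I => (q.2 : ℝ)) (by fun_prop)
      (g₁ := fun q => PathSp.src _ q.1) (g₂ := fun q => PathSp.tgt _ q.1)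
      (by fun_prop) (by fun_prop)
  β_cont := by
    rw [(WedgeCircles.isQuotientMap_prod X).continuousOn_isOpen_iff
      (isOpen_univ.prod (WedgeCircles.isOpen_cover _))]
    rintro ⟨x, t, j⟩ hq
    refine ContinuousAt.continuousWithinAt ?_
    have h := (continuousOn_ite_half (t := fun q : X × (I × Fin m) => (q.2.1 : ℝ)) (by fun_prop)
      (g₁ := fun q => mk (f := f) ⟨j, PathSp.const _ q.1, q.2.1⟩)
      (g₂ := fun q => mk (f := f) ⟨j, (S j).τ q.1, q.2.1⟩)
      (continuous_mk.comp (continuous_sigmaMk.comp (by fun_prop)))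
      (continuous_mk.comp (continuous_sigmaMk.comp (by fun_prop)))).continuousAt
      ((isOpen_ne_fun (by fun_prop) continuous_const).mem_nhds
        (show ((x, t, j) : X × (I × Fin m)).2.1.1 ≠ 1 / 2 from hq.2))
    refine h.congr ?_
    have hj : {q : X × (I × Fin m) | q.2.2 = j} ∈ 𝓝 (x, t, j) :=
      ((isOpen_discrete {j}).preimage (continuous_snd.comp continuous_snd)).mem_nhds rfl
    filter_upwards [hj] with q hq
    obtain ⟨y, t, i⟩ := q
    obtain rfl : i = j := hq
    change _ = mk ⟨i, if (t : ℝ) < 1 / 2 then _ else _, t⟩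
    split_ifs <;> rfl
  V_cont := by
    rw [isQuotientMap_prod.continuousOn_isOpen_iff
      (((WedgeCircles.isOpen_cover _).preimage continuous_proj).prod isOpen_univ)]
    refine continuousOn_sigma_prod ((((WedgeCircles.isOpen_cover _).preimage
      continuous_proj).prod isOpen_univ).preimage (continuous_mk.prodMap continuous_id))
      fun j => ?_
    refine (continuousOn_ite_half (t := fun q : (PathSp (f j) × I) × I => (q.1.2 : ℝ)) (by fun_prop)
      (g₁ := fun q => mk (f := f) ⟨j, PathSp.shrink _ (q.1.1, q.2), q.1.2⟩)
      (g₂ := fun q => mk (f := f) ⟨j, (S j).V (q.1.1, q.2), q.1.2⟩)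
      (continuous_mk.comp (continuous_sigmaMk.comp (by fun_prop)))
      (continuous_mk.comp (continuous_sigmaMk.comp (by fun_prop)))).congr_mono ?_ fun q hq => hq.1
    rintro ⟨⟨n, t⟩, s⟩ -
    change mk ⟨j, if (t : ℝ) < 1 / 2 then _ else _, t⟩ = if (t : ℝ) < 1 / 2 then _ else _
    split_ifs <;> rfl
  V_zero := by
    intro e
    obtain ⟨⟨j, n, t⟩, rfl⟩ := isQuotientMap_mk.surjective e
    refine congrArg mk ?_
    simp [PathSp.shrink_zero, (S j).V_zero]
  V_one := by
    intro e _
    obtain ⟨⟨j, n, t⟩, rfl⟩ := isQuotientMap_mk.surjective e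
    refine congrArg mk ?_
    simp only [toX, mk, PathSp.shrink_one, (S j).V_one]
    split_ifs <;> rfl
  p_V := by
    intro e s
    obtain ⟨⟨j, n, t⟩, rfl⟩ := isQuotientMap_mk.surjective e
    rfl
  p_β := by
    intro x b _
    obtain ⟨⟨t, j⟩, rfl⟩ := WedgeCircles.isQuotientMap_mk.surjective b
    rfl

open Classical in
/-- The coordinate in the mapping path space of a point over the open arc of the `j`-th circle;
the value elsewhere is immaterial. -/
def toPath (j : Fin m) (n₀ : PathSp (f j)) : AuxSp f → PathSp (f j) :=
  Quot.lift (fun q => if h : ¬(q.2.2 = 0 ∨ q.2.2 = 1) ∧ q.1 = j then h.2 ▸ q.2.1 else n₀) (by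
    rintro q q' ⟨x, h, h'⟩
    rw [dif_neg fun H => H.1 (h.imp And.left And.left),
      dif_neg fun H => H.1 (h'.imp And.left And.left)])

lemma toPath_mk {j : Fin m} {n₀ : PathSp (f j)} {n : PathSp (f j)} {t : I}
    (h : ¬(t = 0 ∨ t = 1)) : toPath j n₀ (mk ⟨j, n, t⟩) = n :=
  dif_pos (⟨h, rfl⟩ : ¬(t = 0 ∨ t = 1) ∧ j = j)

/-- Over an open arc, the auxiliary space is a product with the mapping path space. -/
def dominatedSome (j : Fin m) (n₀ : PathSp (f j)) :
    FibreDominated (proj (f := f)) (WedgeCircles.cover (some j)) where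
  Y := PathSp (f j)
  α := toPath j n₀
  β q := mk ⟨j, q.1, WedgeCircles.coord q.2⟩
  V := Prod.fst
  α_cont := by
    rw [isQuotientMap_mk.continuousOn_isOpen_iff
      ((WedgeCircles.isOpen_cover _).preimage continuous_proj)]
    refine continuousOn_sigma (((WedgeCircles.isOpen_cover _).preimage continuous_proj).preimage
      continuous_mk) fun i => ?_
    intro q hq
    obtain rfl : i = j := hq.2
    refine (continuous_fst.continuousOn.congr fun q hq => ?_) q hq
    exact toPath_mk hq.1
  β_cont := by
    refine continuous_mk.comp_continuousOn (continuous_sigmaMk.comp_continuousOn ?_)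
    refine continuousOn_fst.prodMk ?_
    exact (WedgeCircles.continuousOn_coord j).comp continuousOn_snd fun q hq => hq.2
  V_cont := continuousOn_fst
  V_zero _ := rfl
  V_one := by
    intro e he
    obtain ⟨⟨i, n, t⟩, rfl⟩ := isQuotientMap_mk.surjective e
    obtain rfl : i = j := he.2
    simp only [toPath_mk he.1, proj_mk]
    rw [WedgeCircles.coord_mk he.1]
  p_V _ _ := rfl
  p_β := by
    intro n b hb
    obtain ⟨⟨t, i⟩, rfl⟩ := WedgeCircles.isQuotientMap_mk.surjective b
    obtain rfl : i = j := hb.2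
    rw [proj_mk, WedgeCircles.coord_mk hb.1]

/-- The auxiliary space is dominated by a product over every set of the cover. -/
def dominated (x₀ : X) :
    ∀ k, FibreDominated (proj (f := f)) (WedgeCircles.cover k)
  | none => dominatedNone S
  | some j => dominatedSome j (PathSp.const (f j) x₀)

end AuxSp

end Aux

/-! ### Cubes -/

section Cubes

variable {n : ℕ}

/-- The boundary of the cube. -/
def IsBdry (c : Fin n → I) : Prop := ∃ i, c i = 0 ∨ c i = 1

lemma isBdry_cons {a : I} {c : Fin n → I} :
    IsBdry (Fin.cons a c : Fin (n + 1) → I) ↔ (a = 0 ∨ a = 1) ∨ IsBdry c := by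
  simp [IsBdry, Fin.exists_fin_succ]

lemma isBdry_iff {t : Fin (n + 1) → I} :
    IsBdry t ↔ (t 0 = 0 ∨ t 0 = 1) ∨ IsBdry (Fin.tail t) := by
  rw [← isBdry_cons, Fin.cons_self_tail]

lemma isBdry_tail {t : Fin (n + 1) → I} :
    IsBdry (Fin.tail t) ↔ ∃ i : Fin (n + 1), i ≠ 0 ∧ (t i = 0 ∨ t i = 1) := by
  constructor
  · rintro ⟨i, hi⟩
    exact ⟨i.succ, Fin.succ_ne_zero i, hi⟩
  · rintro ⟨i, hi, h⟩
    obtain ⟨j, rfl⟩ := Fin.exists_succ_eq.2 hi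
    exact ⟨j, h⟩

@[fun_prop] lemma continuous_finCons {Z : Type*} [TopologicalSpace Z] {a : Z → I}
    {c : Z → Fin n → I} (ha : Continuous a) (hc : Continuous c) :
    Continuous fun z => (Fin.cons (a z) (c z) : Fin (n + 1) → I) := by
  refine continuous_pi fun i => ?_
  refine Fin.cases ?_ (fun j => ?_) i
  · simpa using ha
  · simpa [Function.comp_def] using (continuous_apply j).comp hc

@[fun_prop] lemma continuous_finTail {Z : Type*} [TopologicalSpace Z]
    {t : Z → Fin (n + 1) → I} (ht : Continuous t) : Continuous fun z => Fin.tail (t z) :=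
  continuous_pi fun j => (continuous_apply j.succ).comp ht

/-- The self-map of the cube collapsing a collar to the boundary, as the stage `v = 1` of a
homotopy which starts with the identity. -/
def collar (v : I) (c : Fin n → I) : Fin n → I := fun i => lerpI v (c i) (clampI (2 * c i - 1 / 2))

@[fun_prop] lemma Continuous.collar {Z : Type*} [TopologicalSpace Z] {v : Z → I}
    {c : Z → Fin n → I} (hv : Continuous v) (hc : Continuous c) :
    Continuous fun z => collar (v z) (c z) := by
  unfold _root_.collar
  fun_prop

@[simp] lemma collar_zero (c : Fin n → I) : collar 0 c = c := by ext i; simp [collar]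

lemma isBdry_collar {c : Fin n → I} (v : I) (hc : IsBdry c) : IsBdry (collar v c) := by
  obtain ⟨i, hi | hi⟩ := hc
  · refine ⟨i, Or.inl ?_⟩
    rw [collar, hi, clampI_of_le (by norm_num), lerpI_self]
  · refine ⟨i, Or.inr ?_⟩
    rw [collar, hi, clampI_of_ge (by norm_num), lerpI_self]

/-- A function on the interval with value `0` at the ends and `1` off a collar. -/
def bumpI (t : I) : I := clampI (4 * min (t : ℝ) (1 - t))

/-- A function on the cube with value `0` on the boundary and `1` off a collar. -/
def bump (c : Fin n → I) : I := ∏ i, bumpI (c i)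

@[fun_prop] lemma continuous_bumpI : Continuous bumpI := by unfold bumpI; fun_prop

@[fun_prop] lemma continuous_bump : Continuous (bump (n := n)) := by unfold bump; fun_prop

lemma bumpI_zero : bumpI 0 = 0 := clampI_of_le (by norm_num)

lemma bumpI_one : bumpI 1 = 0 := clampI_of_le (by norm_num)

lemma bump_eq_zero {c : Fin n → I} (hc : IsBdry c) : bump c = 0 := by
  obtain ⟨i, hi⟩ := hc
  refine Finset.prod_eq_zero (Finset.mem_univ i) ?_
  rcases hi with hi | hi <;> rw [hi]
  exacts [bumpI_zero, bumpI_one]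

lemma of_bumpI_lt_one {t : I} (h : bumpI t < 1) : (t : ℝ) < 1 / 4 ∨ 3 / 4 < (t : ℝ) := by
  have := lt_one_of_clampI h
  rcases min_lt_iff.1 (show min (t : ℝ) (1 - t) < 1 / 4 by linarith) with h | h
  · exact Or.inl h
  · exact Or.inr (by linarith)

lemma isBdry_of_bump_lt_one {c : Fin n → I} (h : bump c < 1) : IsBdry (collar 1 c) := by
  obtain ⟨i, hi⟩ : ∃ i, bumpI (c i) ≠ 1 := by
    by_contra! hc
    exact h.ne (Finset.prod_eq_one fun i _ => hc i)
  refine ⟨i, ?_⟩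
  simp only [collar, lerpI_one]
  rcases of_bumpI_lt_one (lt_of_le_of_ne (Subtype.coe_le_coe.1 (bumpI (c i)).2.2) hi) with h | h
  · exact Or.inl (clampI_of_le (by linarith))
  · exact Or.inr (clampI_of_ge (by linarith))

end Cubes

/-! ### Transfer of the lifting property to relative homotopy groups -/

lemma IsGenLoopAt.eq {n : ℕ} {B : Type*} [TopologicalSpace B] {g : (Fin (n + 1) → I) → B} {y : B}
    (hg : IsGenLoopAt n g y) {a : I} {c : Fin n → I} (h : (a = 0 ∨ a = 1) ∨ IsBdry c) :
    g (Fin.cons a c) = y :=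
  hg.2 _ (isBdry_cons.2 h)

namespace RelGenLoop

variable {n : ℕ} {E : Type*} [TopologicalSpace E] {A : Set E} {x : E}

lemma eq_base (f : RelGenLoop n E A x) {a : I} {c : Fin n → I} (h : a = 1 ∨ IsBdry c) :
    f.toFun (Fin.cons a c) = x :=
  f.jboundary_eq _ (h.imp id fun h => isBdry_tail.1 (by simpa using h))

lemma mem_fibre (f : RelGenLoop n E A x) (c : Fin n → I) : f.toFun (Fin.cons 0 c) ∈ A :=
  f.face_mem _ rfl

/-- The underlying continuous map. -/
def toMap (f : RelGenLoop n E A x) : C(Fin (n + 1) → I, E) := ⟨f.toFun, f.continuous_toFun⟩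

/-- The property defining the maps of pairs among the continuous maps on the cube. -/
def IsRel (A : Set E) (x : E) (φ : C(Fin (n + 1) → I, E)) : Prop :=
  ∀ a c, (a = 0 → φ (Fin.cons a c) ∈ A) ∧ (a = 1 ∨ IsBdry c → φ (Fin.cons a c) = x)

lemma homotopic_of_homotopicWith {f g : RelGenLoop n E A x}
    (h : f.toMap.HomotopicWith g.toMap (IsRel A x)) : f.Homotopic g := by
  obtain ⟨H⟩ := h
  refine ⟨fun q => H (q.2, q.1), by fun_prop, fun t => H.apply_zero t, fun t => H.apply_one t,
    fun t s h => ?_, fun t s h => ?_⟩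
  · have := (H.prop s (t 0) (Fin.tail t)).1 h
    rwa [Fin.cons_self_tail] at this
  · have := (H.prop s (t 0) (Fin.tail t)).2 (h.imp id fun h => isBdry_tail.2 h)
    rwa [Fin.cons_self_tail] at this

end RelGenLoop

/-- Data comparing maps `p : E → B` and `p' : E' → B` in a way that suffices to transfer lifting
properties from `p'` to `p` at the point `y`: a map `d : E → E'` over `B`, and a map `c : E' → E`
over the stage `1` of a deformation `κB` of `B`, such that `c ∘ d` is the stage `1` of a deformation
`κE` of `E` which lies over `κB`; both deformations are stationary over `y`. -/
structure Comparison {E E' B : Type*} [TopologicalSpace E] [TopologicalSpace E']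
    [TopologicalSpace B] (p : E → B) (p' : E' → B) (y : B) where
  d : C(E, E')
  c : C(E', E)
  κE : C(E × I, E)
  κB : C(B × I, B)
  p'_d : ∀ e, p' (d e) = p e
  p_c : ∀ e, p (c e) = κB (p' e, 1)
  c_d : ∀ e, c (d e) = κE (e, 1)
  κE_zero : ∀ e, κE (e, 0) = e
  κB_zero : ∀ b, κB (b, 0) = b
  p_κE : ∀ e v, p (κE (e, v)) = κB (p e, v)
  κE_fix : ∀ e v, p e = y → κE (e, v) = e
  κB_fix : ∀ v, κB (y, v) = y

section Transfer

variable {E E' : Type u} {B : Type v} [TopologicalSpace E] [TopologicalSpace E']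
    [TopologicalSpace B] {p : E → B} {p' : E' → B} {y : B} {x : E} {n : ℕ}
    {κ : Type*} {U : κ → Set B}

/-- Surjectivity: a map `g` on the cube, regarded as a homotopy in its first coordinate, is
lifted to `E'` and transferred to `E`. -/
lemma Comparison.surjective (M : Comparison p p' y) (hUo : ∀ k, IsOpen (U k))
    (hUc : ∀ b, ∃ k, b ∈ U k) (D : ∀ k, FibreDominated p' (U k)) (hx : p x = y)
    (g : (Fin (n + 1) → I) → B) (hg : IsGenLoopAt n g y) :
    ∃ f : RelGenLoop n E (p ⁻¹' {y}) x, GenLoopHomotopic n (p ∘ f.toFun) g y := by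
  have hgc := hg.1
  obtain ⟨L, R, hL, hR, hR0, hR1, hL0, hpL, hLψ⟩ := weak_covering_homotopy (p := p')
    (h := fun q : (Fin n → I) × I => g (Fin.cons (σ q.2) (collar 1 q.1)))
    (ψ := bump) (ρ₀ := fun _ => M.d x) hUo hUc D (by fun_prop) (by fun_prop)
    (fun c hc t => by rw [hg.eq (.inr (isBdry_of_bump_lt_one hc)),
      hg.eq (.inr (isBdry_of_bump_lt_one hc))])
    continuous_const (fun c => by simp [M.p'_d, hx, hg.eq])
  have hcdx : M.c (M.d x) = x := by rw [M.c_d, M.κE_fix x _ hx]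
  refine ⟨⟨fun t => M.c (L (σ (t 0), Fin.tail t)), by fun_prop, fun t ht => ?_, fun t ht => ?_⟩,
    fun q => M.κB (g (Fin.cons (lerpI q.2 (σ (R (σ (q.1 0), Fin.tail q.1))) (q.1 0))
      (collar (σ q.2) (Fin.tail q.1))), σ q.2), by fun_prop, fun t => ?_, fun t => ?_,
    fun t s ht => ?_⟩
  · simp [ht, M.p_c, hpL, hR1, hg.eq, M.κB_fix]
  · rw [← isBdry_tail] at ht
    rcases ht with ht | ht
    · simp [ht, hL0, hcdx]
    · simp [hLψ _ _ (bump_eq_zero ht), hcdx]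
  · simp [M.p_c, hpL]
  · simp [M.κB_zero, Fin.cons_self_tail]
  · dsimp only
    rw [hg.eq, M.κB_fix]
    rcases isBdry_iff.1 ht with (ht | ht) | ht
    · simp [ht, hR1]
    · simp [ht, hR0]
    · exact .inr (isBdry_collar _ ht)

/-- The composite of `c ∘ d` with a map of pairs `f` is homotopic to `f`, also after a collar of
the cube has been collapsed. -/
lemma Comparison.homotopicWith (M : Comparison p p' y) (hx : p x = y)
    (f : RelGenLoop n E (p ⁻¹' {y}) x) (Φ : C(Fin (n + 1) → I, E))
    (hΦ : ∀ a c, Φ (Fin.cons a c) =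
      M.c (M.d (f.toFun (Fin.cons (clampI (2 * a - 1)) (collar 1 c))))) :
    f.toMap.HomotopicWith Φ (RelGenLoop.IsRel (p ⁻¹' {y}) x) := by
  have hfc := f.continuous_toFun
  refine ⟨⟨⟨⟨fun q => M.κE (f.toFun (Fin.cons (lerpI q.1 (q.2 0) (clampI (2 * q.2 0 - 1)))
    (collar q.1 (Fin.tail q.2))), q.1), by fun_prop⟩, fun t => ?_, fun t => ?_⟩, ?_⟩⟩
  · simp [M.κE_zero, Fin.cons_self_tail, RelGenLoop.toMap]
  · rw [← Fin.cons_self_tail t, hΦ]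
    simp [M.c_d]
  · intro s a c
    refine ⟨?_, fun h => ?_⟩
    · rintro rfl
      have := f.mem_fibre (collar s c)
      simp only [mem_preimage, mem_singleton_iff] at this
      simp [clampI_of_le, M.p_κE, M.κB_fix, this]
    · simp only [ContinuousMap.coe_mk, Fin.cons_zero, Fin.tail_cons]
      rw [f.eq_base, M.κE_fix x _ hx]
      rcases h with rfl | h
      · left
        rw [clampI_of_ge (by norm_num), lerpI_self]
      · exact .inr (isBdry_collar _ h)

/-- The first coordinate of the domain of a homotopy, as a function of the time `u` of the
homotopy: it travels from `0` to `1` and, after a pause, back. -/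
def travel (u : I) : I := clampI (min (5 * u - 1) (4 - 5 * u))

@[fun_prop] lemma continuous_travel : Continuous travel := by unfold travel; fun_prop

lemma travel_zero : travel 0 = 0 := clampI_of_le (by norm_num)

lemma travel_one : travel 1 = 0 := clampI_of_le (by norm_num)

/-- Injectivity: a homotopy `G` between the images of maps of pairs `f₁` and `f₂` is regarded as a
homotopy in the first coordinate of the cube. The start of the lift is given on the
union of the ends of `G` and of the face `t₀ = 1`, which is parametrized by `travel`. The homotopy
between `f₁` and `f₂` is read off along a family of paths in the square of the parameters
`(u, s)`, which sweeps from the left, upper and right side to a part of the lower side. -/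
lemma Comparison.injective (M : Comparison p p' y) (hUo : ∀ k, IsOpen (U k))
    (hUc : ∀ b, ∃ k, b ∈ U k) (D : ∀ k, FibreDominated p' (U k)) (hx : p x = y)
    (f₁ f₂ : RelGenLoop n E (p ⁻¹' {y}) x)
    (h : GenLoopHomotopic n (p ∘ f₁.toFun) (p ∘ f₂.toFun) y) : f₁.Homotopic f₂ := by
  obtain ⟨G, hG, hG0, hG1, hGy⟩ := h
  have hf₁ := f₁.continuous_toFun
  have hf₂ := f₂.continuous_toFun
  have hGy' : ∀ {a : I} {c : Fin n → I} {s : I}, (a = 0 ∨ a = 1) ∨ IsBdry c →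
      G (Fin.cons a c, s) = y := fun h => hGy _ _ (isBdry_cons.2 h)
  -- The time parameter of `G` only moves during the pause of `travel`, for `2 / 5 ≤ u ≤ 3 / 5`.
  let w : I → I := fun u => clampI (5 * u - 2)
  have hw : Continuous w := by fun_prop
  let ρ : (Fin n → I) × I → E' := fun q =>
    if (q.2 : ℝ) ≤ 1 / 2 then M.d (f₁.toFun (Fin.cons (travel q.2) (collar 1 q.1)))
    else M.d (f₂.toFun (Fin.cons (travel q.2) (collar 1 q.1)))
  have hρ : Continuous ρ := by
    refine Continuous.if_le (by fun_prop) (by fun_prop) (by fun_prop) (by fun_prop) ?_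
    intro q hq
    have h1 : travel q.2 = 1 := by
      rw [travel, hq]
      exact clampI_of_ge (by norm_num)
    rw [h1, f₁.eq_base (.inl rfl), f₂.eq_base (.inl rfl)]
  have hρx : ∀ c u, travel u = 1 ∨ IsBdry (collar 1 c) → ρ (c, u) = M.d x := fun c u h => by
    simp only [ρ]
    split_ifs
    · rw [f₁.eq_base h]
    · rw [f₂.eq_base h]
  let ψ : (Fin n → I) × I → I := fun q => bump q.1 * clampI (5 * min (q.2 : ℝ) (1 - q.2))
  have hψ0 : ∀ c u, u = 0 ∨ u = 1 ∨ IsBdry c → ψ (c, u) = 0 := by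
    rintro c u (rfl | rfl | h)
    · simp [ψ, clampI_of_le]
    · simp [ψ, clampI_of_le]
    · simp [ψ, bump_eq_zero h]
  let h : ((Fin n → I) × I) × I → B := fun q =>
    G (Fin.cons (travel q.1.2 * σ q.2) (collar 1 q.1.1), w q.1.2)
  have hst : ∀ c, ψ c < 1 → ∀ t, h (c, t) = h (c, 0) := by
    rintro ⟨c, u⟩ hcu t
    simp only [h]
    by_cases hc : bump c < 1
    · rw [hGy' (.inr (isBdry_of_bump_lt_one hc)), hGy' (.inr (isBdry_of_bump_lt_one hc))]
    · have h1 : bump c = 1 := le_antisymm (Subtype.coe_le_coe.1 (bump c).2.2) (not_lt.1 hc)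
      simp only [ψ, h1, one_mul] at hcu
      have h2 := lt_one_of_clampI hcu
      have h3 : travel u = 0 := by
        refine clampI_of_le ?_
        rcases min_lt_iff.1 (show min (u : ℝ) (1 - u) < 1 / 5 by linarith) with h | h
        · exact (min_le_left _ _).trans (by linarith)
        · exact (min_le_right _ _).trans (by linarith)
      simp [h3]
  have hlift : ∀ c, p' (ρ c) = h (c, 0) := by
    rintro ⟨c, u⟩
    simp only [ρ, h]
    split_ifs with hu
    · rw [M.p'_d]
      by_cases hu' : (u : ℝ) ≤ 2 / 5
      · have : w u = 0 := clampI_of_le (by linarith)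
        simp [this, hG0]
      · have : travel u = 1 := clampI_of_ge (le_min (by linarith) (by linarith))
        rw [this, f₁.eq_base (.inl rfl), hx, hGy' (by simp)]
    · rw [M.p'_d]
      by_cases hu' : 3 / 5 ≤ (u : ℝ)
      · have : w u = 1 := clampI_of_ge (by linarith)
        simp [this, hG1]
      · have : travel u = 1 := clampI_of_ge (le_min (by linarith) (by linarith))
        rw [this, f₂.eq_base (.inl rfl), hx, hGy' (by simp)]
  obtain ⟨L, R, hL, hR, hR0, hR1, hL0, hpL, hLψ⟩ := weak_covering_homotopy (p := p') hUo hUc D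
    (show Continuous h by fun_prop) (show Continuous ψ by fun_prop) hst hρ hlift
  have hcdx : M.c (M.d x) = x := by rw [M.c_d, M.κE_fix x _ hx]
  -- The family of paths in the square of the parameters `(u, s)`, where `v` is the time on a path:
  -- for `a = 0` they run along three sides, and for `a = 1` along `2 / 5 ≤ u ≤ 3 / 5`, `s = 0`.
  let pu : I → I → I := fun a v => lerpI a (clampI (3 * v - 1)) (clampI (2 / 5 + v / 5))
  let ps : I → I → I := fun a v => lerpI a (clampI (min (3 * v) (3 - 3 * v))) 0
  let Φ : C(I × (Fin (n + 1) → I), E) :=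
    ⟨fun q => M.c (L (ps (q.2 0) q.1, (Fin.tail q.2, pu (q.2 0) q.1))), by
      simp only [pu, ps]; fun_prop⟩
  have key : ∀ v, RelGenLoop.IsRel (p ⁻¹' {y}) x (Φ.comp ⟨fun t => (v, t), by fun_prop⟩) := by
    intro v a c
    have e : Φ (v, Fin.cons a c) = M.c (L (ps a v, (c, pu a v))) := by simp [Φ]
    refine ⟨?_, fun h => ?_⟩
    · rintro rfl
      change p (Φ (v, _)) = y
      rw [e, M.p_c]
      suffices h : p' (L (ps 0 v, (c, pu 0 v))) = y by rw [h, M.κB_fix]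
      simp only [pu, ps, lerpI_zero]
      rcases le_total (v : ℝ) (1 / 3) with hv | hv
      · rw [clampI_of_le (x := 3 * v - 1) (by linarith), hLψ _ _ (hψ0 _ _ (by simp))]
        simpa [ρ, M.p'_d, travel_zero] using f₁.mem_fibre _
      rcases le_total (v : ℝ) (2 / 3) with hv' | hv'
      · rw [clampI_of_ge (x := min (3 * (v : ℝ)) _) (le_min (by linarith) (by linarith)), hpL, hR1]
        exact hGy' (by simp)
      · have h2 : ¬ (1 : ℝ) ≤ 1 / 2 := by norm_num
        rw [clampI_of_ge (x := 3 * v - 1) (by linarith), hLψ _ _ (hψ0 _ _ (by simp))]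
        simp only [ρ, Icc.coe_one, if_neg h2, M.p'_d, travel_one]
        exact f₂.mem_fibre _
    · change Φ (v, _) = x
      rw [e]
      rcases h with rfl | h
      · simp only [pu, ps, lerpI_one]
        rw [hL0, hρx, hcdx]
        left
        have h1 : (clampI (2 / 5 + v / 5) : ℝ) = 2 / 5 + v / 5 := by
          have := v.2.1; have := v.2.2
          rw [coe_clampI, min_eq_right (by linarith), max_eq_right (by linarith)]
        have := v.2.1; have := v.2.2
        rw [travel, h1]
        exact clampI_of_ge (le_min (by linarith) (by linarith))
      · rw [hLψ _ _ (hψ0 _ _ (.inr (.inr h))), hρx _ _ (.inr (isBdry_collar _ h)), hcdx]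
  refine RelGenLoop.homotopic_of_homotopicWith ?_
  refine (M.homotopicWith hx f₁ (Φ.comp ⟨fun t => (0, t), by fun_prop⟩) ?_).trans
    (.trans (g := Φ.comp ⟨fun t => (1, t), by fun_prop⟩)
      ⟨⟨⟨Φ, fun t => rfl, fun t => rfl⟩, key⟩⟩
      (M.homotopicWith hx f₂ (Φ.comp ⟨fun t => (1, t), by fun_prop⟩) ?_).symm)
  · intro a c
    have h1 : (pu a 0 : ℝ) = 2 / 5 * a := by
      simp only [pu, coe_lerpI, coe_clampI, Icc.coe_zero]
      norm_num
      ring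
    have h2 : ps a 0 = 0 := by
      simp [ps, clampI_of_le]
    have := a.2.2
    have h3 : travel (pu a 0) = clampI (2 * a - 1) := by
      rw [travel, h1, min_eq_left (by linarith)]
      ring_nf
    change M.c (L (ps a 0, (c, pu a 0))) = _
    rw [h2, hL0]
    simp only [ρ, h1, h3]
    rw [if_pos (by linarith)]
  · intro a c
    have h1 : (pu a 1 : ℝ) = 1 - 2 / 5 * a := by
      simp only [pu, coe_lerpI, coe_clampI, Icc.coe_one]
      norm_num
      ring
    have h2 : ps a 1 = 0 := by
      simp [ps, clampI_of_le]
    have := a.2.2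
    have h3 : travel (pu a 1) = clampI (2 * a - 1) := by
      rw [travel, h1, min_eq_right (by linarith)]
      ring_nf
    change M.c (L (ps a 1, (c, pu a 1))) = _
    rw [h2, hL0]
    simp only [ρ, h1, h3]
    rw [if_neg (by linarith)]

end Transfer

/-! ### Comparison of the glued mapping tori with the auxiliary space -/

/-- A reparametrization of the interval which fixes `0`, `1` and all `t ≤ t₀`, and which has the
value `1` for `(1 + t₀) / 2 ≤ t`. -/
def squash (t₀ t : I) : I := clampI (max (t : ℝ) (2 * t - t₀))

@[fun_prop] lemma continuous_squash (t₀ : I) : Continuous (squash t₀) := by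
  unfold squash; fun_prop

lemma squash_of_le {t₀ t : I} (h : t ≤ t₀) : squash t₀ t = t := by
  have h' : (t : ℝ) ≤ t₀ := h
  rw [squash, max_eq_left (by linarith)]
  exact projIcc_val zero_le_one t

lemma squash_of_ge {t₀ t : I} (h : (1 + (t₀ : ℝ)) / 2 ≤ t) : squash t₀ t = 1 :=
  clampI_of_ge (le_max_of_le_right (by linarith))

lemma squash_zero (t₀ : I) : squash t₀ 0 = 0 := squash_of_le t₀.2.1

lemma squash_one (t₀ : I) : squash t₀ 1 = 1 :=
  squash_of_ge (by have := t₀.2.2; simp only [Icc.coe_one]; linarith)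

lemma continuous_of_fin {m : ℕ} {A Z W : Type*} [TopologicalSpace A] [TopologicalSpace Z]
    [TopologicalSpace W] {g : A × Z × Fin m → W}
    (h : ∀ j, Continuous fun q : A × Z => g (q.1, q.2, j)) : Continuous g := by
  rw [continuous_iff_continuousAt]
  rintro ⟨a, z, j⟩
  have h1 : Continuous fun q : A × Z × Fin m => g (q.1, q.2.1, j) :=
    (h j).comp (by fun_prop : Continuous fun q : A × Z × Fin m => (q.1, q.2.1))
  refine h1.continuousAt.congr ?_
  have hj : {q : A × Z × Fin m | q.2.2 = j} ∈ 𝓝 (a, z, j) :=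
    ((isOpen_discrete {j}).preimage (continuous_snd.comp continuous_snd)).mem_nhds rfl
  filter_upwards [hj] with q hq
  obtain ⟨b, w, i⟩ := q
  obtain rfl : i = j := hq
  rfl

namespace WedgeCircles

variable {m : ℕ}

/-- The deformation of the wedge of circles given by `squash t₀` on each circle. -/
def squashMap (t₀ : I) : C(WedgeCircles m × I, WedgeCircles m) where
  toFun q := Quot.lift (fun z : I × Fin m => mk (lerpI q.2 z.1 (squash t₀ z.1), z.2)) (by
    have key : ∀ t : I, t = 0 ∨ t = 1 → lerpI q.2 t (squash t₀ t) = t := by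
      rintro t (rfl | rfl) <;> simp [squash_zero, squash_one]
    rintro z z' ⟨h, h'⟩
    exact mk_eq (by rwa [key _ h]) (by rwa [key _ h'])) q.1
  continuous_toFun := by
    refine isQuotientMap_mk.continuous_lift_prod_left ?_
    exact continuous_mk.comp (by fun_prop :
      Continuous fun q : (I × Fin m) × I => (lerpI q.2 q.1.1 (squash t₀ q.1.1), q.1.2))

lemma squashMap_mk (t₀ : I) (z : I × Fin m) (v : I) :
    squashMap t₀ (mk z, v) = mk (lerpI v z.1 (squash t₀ z.1), z.2) := rfl

end WedgeCircles

namespace GluedMappingTori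

variable {X : Type u} [TopologicalSpace X] {m : ℕ} {f : Fin m → C(X, X)}

/-- The quotient map onto the glued mapping tori. -/
def mk (q : X × I × Fin m) : GluedMappingTori (fun j => ⇑(f j)) := Quot.mk _ q

lemma isQuotientMap_mk : IsQuotientMap (mk (f := f)) := isQuotientMap_quot_mk

lemma continuous_mk : Continuous (mk (f := f)) := continuous_quot_mk

lemma mk_one (x : X) (j : Fin m) : mk (f := f) (x, 1, j) = mk (f j x, 0, j) :=
  Quot.sound (Or.inl ⟨rfl, rfl, rfl, rfl⟩)

lemma mk_zero (x : X) (j k : Fin m) : mk (f := f) (x, 0, j) = mk (x, 0, k) :=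
  Quot.sound (Or.inr ⟨rfl, rfl, rfl⟩)

lemma exists_rep (e : GluedMappingTori (fun j => ⇑(f j))) :
    ∃ x t j, t ≠ 1 ∧ e = mk (f := f) (x, t, j) := by
  obtain ⟨⟨x, t, j⟩, rfl⟩ := isQuotientMap_mk.surjective e
  by_cases h : t = 1
  · subst h
    exact ⟨f j x, 0, j, zero_ne_one, mk_one x j⟩
  · exact ⟨x, t, j, h, rfl⟩

lemma proj_mk (q : X × I × Fin m) :
    gluedMappingToriProj (fun j => ⇑(f j)) (mk q) = WedgeCircles.mk (q.2.1, q.2.2) := rfl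

lemma continuous_proj : Continuous (gluedMappingToriProj (fun j => ⇑(f j))) :=
  isQuotientMap_mk.continuous_iff.2 (WedgeCircles.continuous_mk.comp continuous_snd)

/-- The map to the auxiliary space over the wedge of circles, through constant paths. -/
def toAux : C(GluedMappingTori (fun j => ⇑(f j)), AuxSp f) where
  toFun := Quot.lift (fun q => AuxSp.mk ⟨q.2.2, PathSp.const _ q.1, q.2.1⟩) (by
    rintro ⟨x, t, j⟩ ⟨x', t', j'⟩ (⟨h1, h2, h3, h4⟩ | ⟨h1, h2, h3⟩) <;>
      dsimp only at h1 h2 h3 <;> subst h1 h2 h3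
    · exact AuxSp.mk_eq (Or.inr ⟨rfl, rfl⟩) (Or.inl ⟨rfl, rfl⟩)
    · exact AuxSp.mk_eq (Or.inl ⟨rfl, rfl⟩) (Or.inl ⟨rfl, rfl⟩))
  continuous_toFun := by
    refine isQuotientMap_mk.continuous_iff.2 (continuous_of_fin fun j => ?_)
    exact AuxSp.continuous_mk.comp (continuous_sigmaMk.comp (by fun_prop :
      Continuous fun q : X × I => (PathSp.const (f j) q.1, q.2)))

lemma toAux_mk (q : X × I × Fin m) :
    toAux (mk (f := f) q) = AuxSp.mk ⟨q.2.2, PathSp.const _ q.1, q.2.1⟩ := rfl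

/-- The deformation of the glued mapping tori given by `squash t₀` on the intervals. -/
def squashMap (t₀ : I) :
    C(GluedMappingTori (fun j => ⇑(f j)) × I, GluedMappingTori (fun j => ⇑(f j))) where
  toFun q := Quot.lift
    (fun a : X × I × Fin m => mk (f := f) (a.1, lerpI q.2 a.2.1 (squash t₀ a.2.1), a.2.2)) (by
      rintro ⟨x, t, j⟩ ⟨x', t', j'⟩ (⟨h1, h2, h3, h4⟩ | ⟨h1, h2, h3⟩) <;>
        dsimp only at h1 h2 h3 <;> subst h1 h2 h3
      · dsimp only at h4
        subst h4
        simpa [squash_zero, squash_one] using mk_one x j'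
      · simpa [squash_zero] using mk_zero _ j j') q.1
  continuous_toFun := by
    refine isQuotientMap_mk.continuous_lift_prod_left ?_
    exact continuous_mk.comp (by fun_prop : Continuous fun q : (X × I × Fin m) × I =>
      (q.1.1, lerpI q.2 q.1.2.1 (squash t₀ q.1.2.1), q.1.2.2))

lemma squashMap_mk (t₀ : I) (q : X × I × Fin m) (v : I) :
    squashMap t₀ (mk (f := f) q, v) = mk (q.1, lerpI v q.2.1 (squash t₀ q.2.1), q.2.2) := rfl

/-- The map `ofAux` on the disjoint union of the products of the mapping path spaces with the
interval. -/
def ofSeg (t₀ : I) (q : Seg f) : GluedMappingTori (fun j => ⇑(f j)) :=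
  if (q.2.2 : ℝ) ≤ (1 + t₀) / 2 then mk (PathSp.src _ q.2.1, squash t₀ q.2.2, q.1)
  else mk (q.2.1.1.2 (clampI ((q.2.2 - (1 + t₀) / 2) / (1 - (1 + t₀) / 2))), 0, q.1)

lemma continuous_ofSeg (t₀ : I) : Continuous (ofSeg (f := f) t₀) := by
  refine continuous_sigma fun j => ?_
  have h1 : Continuous fun q : PathSp (f j) × I =>
      mk (f := f) (PathSp.src _ q.1, squash t₀ q.2, j) := continuous_mk.comp (by fun_prop)
  have h2 : Continuous fun q : PathSp (f j) × I => mk (f := f)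
      (q.1.1.2 (clampI ((q.2 - (1 + t₀) / 2) / (1 - (1 + t₀) / 2))), 0, j) :=
    continuous_mk.comp (by fun_prop)
  refine Continuous.if_le h1 h2 (f := fun q : PathSp (f j) × I => (q.2 : ℝ))
    (g := fun _ => (1 + (t₀ : ℝ)) / 2) (by fun_prop) continuous_const ?_
  intro q hq
  rw [squash_of_ge hq.ge, hq, sub_self, zero_div, clampI_of_le le_rfl, mk_one, q.1.2]
  rfl

lemma ofSeg_of_isEnd {t₀ : I} (h₀ : t₀ ≠ 1) {q : Seg f} {x : X} (h : IsEnd f q x) :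
    ofSeg t₀ q = mk (x, 0, q.1) := by
  have h0 := t₀.2.1
  have h1 : (t₀ : ℝ) < 1 := lt_of_le_of_ne t₀.2.2 fun h => h₀ (Subtype.ext h)
  obtain ⟨j, n, t⟩ := q
  rcases h with ⟨rfl, rfl⟩ | ⟨rfl, rfl⟩
  · rw [ofSeg, if_pos (by simp only [Icc.coe_zero]; linarith), squash_zero]
  · rw [ofSeg, if_neg (by simp only [Icc.coe_one]; linarith)]
    have h2 : (1 : ℝ) - (1 + t₀) / 2 ≠ 0 := by linarith
    simp only [Icc.coe_one]
    rw [div_self h2, clampI_of_ge le_rfl]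
    rfl

/-- The map from the auxiliary space over the stage `1` of `squashMap`. The interval up to
`(1 + t₀) / 2` is stretched and mapped to the mapping torus, by forgetting the paths. The rest of
the interval is mapped to the copy of `X` over the wedge point, along the paths. -/
def ofAux (t₀ : I) (h₀ : t₀ ≠ 1) : C(AuxSp f, GluedMappingTori (fun j => ⇑(f j))) where
  toFun := Quot.lift (ofSeg t₀) fun _ _ ⟨x, h, h'⟩ => by
    rw [ofSeg_of_isEnd h₀ h, ofSeg_of_isEnd h₀ h', mk_zero]
  continuous_toFun := AuxSp.isQuotientMap_mk.continuous_iff.2 (continuous_ofSeg t₀)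

lemma ofAux_mk (t₀ : I) (h₀ : t₀ ≠ 1) (q : Seg f) : ofAux t₀ h₀ (AuxSp.mk q) = ofSeg t₀ q := rfl

/-- The comparison of the glued mapping tori with the auxiliary space, at a point of the wedge
of circles with coordinate `t₀ ≠ 1`. -/
def comparison (t₀ : I) (j₀ : Fin m) (h₀ : t₀ ≠ 1) :
    Comparison (gluedMappingToriProj (fun j => ⇑(f j))) (AuxSp.proj (f := f))
      (WedgeCircles.mk (t₀, j₀)) where
  d := toAux
  c := ofAux t₀ h₀
  κE := squashMap t₀
  κB := WedgeCircles.squashMap t₀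
  p'_d e := by
    obtain ⟨q, rfl⟩ := isQuotientMap_mk.surjective e
    rfl
  p_c e := by
    obtain ⟨q, rfl⟩ := AuxSp.isQuotientMap_mk.surjective e
    rw [ofAux_mk, AuxSp.proj_mk, WedgeCircles.squashMap_mk, ofSeg, lerpI_one]
    split_ifs with h
    · rfl
    · rw [squash_of_ge (le_of_not_ge h)]
      exact WedgeCircles.mk_eq (.inl rfl) (.inr rfl)
  c_d e := by
    obtain ⟨⟨x, t, j⟩, rfl⟩ := isQuotientMap_mk.surjective e
    rw [toAux_mk, ofAux_mk, squashMap_mk, ofSeg, lerpI_one]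
    split_ifs with h
    · rfl
    · rw [squash_of_ge (le_of_not_ge h), mk_one]
      rfl
  κE_zero e := by
    obtain ⟨q, rfl⟩ := isQuotientMap_mk.surjective e
    rw [squashMap_mk, lerpI_zero]
  κB_zero b := by
    obtain ⟨z, rfl⟩ := WedgeCircles.isQuotientMap_mk.surjective b
    rw [WedgeCircles.squashMap_mk, lerpI_zero]
  p_κE e v := by
    obtain ⟨q, rfl⟩ := isQuotientMap_mk.surjective e
    rfl
  κE_fix e v he := by
    obtain ⟨⟨x, t, j⟩, rfl⟩ := isQuotientMap_mk.surjective e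
    rw [proj_mk, WedgeCircles.mk_eq_iff] at he
    have ht : squash t₀ t = t := by
      rcases he with he | ⟨he | he, -⟩
      · exact squash_of_le (congrArg Prod.fst he).le
      · dsimp only at he
        rw [he, squash_zero]
      · dsimp only at he
        rw [he, squash_one]
    rw [squashMap_mk]
    simp only [ht, lerpI_self]
  κB_fix v := by
    rw [WedgeCircles.squashMap_mk]
    simp only [squash_of_le le_rfl, lerpI_self]

end GluedMappingTori

/-! ### The quasifibration property -/

/-- If `f 1, …, f m : X → X` are continuous maps, each of which is a
homotopy equivalence, then the projection `F : K → ⋁_{j=1}^m S¹_j` from the space obtained by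
gluing the mapping tori of the `f j` along `X × {0}` to the wedge of `m` circles is
(continuous and) a quasifibration. -/
theorem gluedMappingToriProj_isQuasifibration {X : Type*} [TopologicalSpace X] {m : ℕ}
    (f : Fin m → C(X, X))
    (hf : ∀ j, ∃ g : C(X, X), (g.comp (f j)).Homotopic (ContinuousMap.id X) ∧
      ((f j).comp g).Homotopic (ContinuousMap.id X)) :
    Continuous (gluedMappingToriProj (fun j => ⇑(f j))) ∧
      IsQuasifibration (gluedMappingToriProj (fun j => ⇑(f j))) := by
  refine ⟨GluedMappingTori.continuous_proj, fun n y e he => ?_⟩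
  obtain ⟨x, t₀, j₀, h₀, rfl⟩ := GluedMappingTori.exists_rep e
  obtain rfl : WedgeCircles.mk (t₀, j₀) = y := he
  let D := AuxSp.dominated (fun j => (PathSp.nonempty_shrinking (f j) (hf j)).some) x
  let M := GluedMappingTori.comparison (f := f) t₀ j₀ h₀
  exact ⟨M.surjective WedgeCircles.isOpen_cover WedgeCircles.exists_mem_cover D rfl,
    M.injective WedgeCircles.isOpen_cover WedgeCircles.exists_mem_cover D rfl⟩
end
end
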